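/- (Bernstein–Gortler–Theran) For a linear subspace $L$ of the space $\mathcal{S}^n$ of real symmetric $n\times n$ matrices that contains a positive definite matrix, let $\mathcal{M}_L = L \cap \{\text{positive definite matrices}\}$. The maximum likelihood threshold of $\mathcal{M}_L$ is the smallest positive integer $d$ such that for Lebesgue-almost every real $n\times d$ matrix $X$, the function $K \mapsto \operatorname{tr}(XX^{T}K) - \log\det K$ attains a minimum on $\mathcal{M}_L$. Fix $n \ge 1$ and let $1 \le m \le n(n+1)/2$. For Lebesgue-almost every $m$-tuple $(B_1,\dots,B_m)$ of real symmetric $n\times n$ matrices (with respect to Lebesgue measure on the $m$-fold product of $\mathcal{S}^n$) such that each $B_i$ is positive definite, letting $L$ be the linear span of $B_1,\dots,B_m$, the maximum likelihood threshold of $\mathcal{M}_L$ equals the minimum positive integer $d$ such that $m \le nd - \frac{d(d-1)}{2}$. -/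

import Mathlib

open MeasureTheory
open scoped Matrix

noncomputable section

/-- The objective function `K ↦ tr(S K) − log det K` of Gaussian maximum likelihood. -/
def mlObjective {n : ℕ} (S K : Matrix (Fin n) (Fin n) ℝ) : ℝ :=
  (S * K).trace - Real.log K.det

/-- The function `K ↦ tr(S K) − log det K` attains a minimum on `M`. -/
def MLEExists {n : ℕ} (M : Set (Matrix (Fin n) (Fin n) ℝ)) (S : Matrix (Fin n) (Fin n) ℝ) : Prop :=
  ∃ K ∈ M, ∀ K' ∈ M, mlObjective S K ≤ mlObjective S K'

/-- `d` is the maximum likelihood threshold of the set `M` of positive definite matrices: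
the smallest positive integer such that for Lebesgue-almost every real `n × d`
matrix `X`, the function `K ↦ tr(X Xᵀ K) − log det K` attains a minimum on `M`. -/
def IsMLThreshold {n : ℕ} (M : Set (Matrix (Fin n) (Fin n) ℝ)) (d : ℕ) : Prop :=
  IsLeast {e : ℕ | 0 < e ∧ ∀ᵐ X : Fin n → Fin e → ℝ ∂volume,
    MLEExists M (Matrix.of X * (Matrix.of X)ᵀ)} d

/-- The linear concentration model `L ∩ {positive definite matrices}`.
(`Matrix.PosDef` includes symmetry.) -/
def linearConcentrationModel {n : ℕ} (L : Submodule ℝ (Matrix (Fin n) (Fin n) ℝ)) :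
    Set (Matrix (Fin n) (Fin n) ℝ) :=
  {K | K ∈ L ∧ K.PosDef}

/-- The symmetric matrix whose `(i,j)` entry is `f s(i,j)`; this identifies the space of
real symmetric `n × n` matrices with `Sym2 (Fin n) → ℝ`, carrying Lebesgue measure. -/
def symMatrixOf {n : ℕ} (f : Sym2 (Fin n) → ℝ) : Matrix (Fin n) (Fin n) ℝ :=
  Matrix.of fun i j => f s(i, j)

end

/-- The volume on a product of spaces with Haar volume is a Haar measure. -/
instance isAddHaarMeasure_volume_prod {E F : Type*} [AddGroup E] [TopologicalSpace E]
    [MeasureSpace E] [AddGroup F] [TopologicalSpace F] [MeasureSpace F]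
    [SFinite (volume : Measure E)] [SFinite (volume : Measure F)]
    [MeasurableAdd E] [MeasurableAdd F]
    [(volume : Measure E).IsAddHaarMeasure] [(volume : Measure F).IsAddHaarMeasure] :
    (volume : Measure (E × F)).IsAddHaarMeasure :=
  Measure.prod.instIsAddHaarMeasure _ _

/-- The volume on real matrices is a Haar measure. -/
instance isAddHaarMeasure_volume_pi_pi {ι κ : Type*} [Fintype ι] [Fintype κ] :
    (volume : Measure (ι → κ → ℝ)).IsAddHaarMeasure :=
  have : SigmaFinite (volume : Measure (κ → ℝ)) := inferInstance
  have : MeasurableAdd (κ → ℝ) := inferInstance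
  have : (volume : Measure (κ → ℝ)).IsAddHaarMeasure := inferInstance
  Measure.pi.isAddHaarMeasure _

instance isAddHaarMeasure_volume_pi_pi_prod_pi_pi {ι κ ι' κ' : Type*} [Fintype ι] [Fintype κ]
    [Fintype ι'] [Fintype κ'] :
    (volume : Measure ((ι → κ → ℝ) × (ι' → κ' → ℝ))).IsAddHaarMeasure :=
  isAddHaarMeasure_volume_prod

instance isAddHaarMeasure_volume_pi_pi_prod_pi {ι κ ι' : Type*} [Fintype ι] [Fintype κ]
    [Fintype ι'] : (volume : Measure ((ι → κ → ℝ) × (ι' → ℝ))).IsAddHaarMeasure :=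
  isAddHaarMeasure_volume_prod

instance isAddHaarMeasure_volume_pi_prod_pi_pi {ι κ ι' : Type*} [Fintype ι] [Fintype κ]
    [Fintype ι'] : (volume : Measure ((ι' → ℝ) × (ι → κ → ℝ))).IsAddHaarMeasure :=
  isAddHaarMeasure_volume_prod

section Analytic

variable {E : Type*} [NormedAddCommGroup E] [NormedSpace ℝ E] [FiniteDimensional ℝ E]
  [MeasurableSpace E] [BorelSpace E] {μ : Measure E} [μ.IsAddHaarMeasure]

/-- A real analytic function that is not identically zero is nonzero almost everywhere. -/
theorem ae_ne_zero_of_analytic {f : E → ℝ} (hf : AnalyticOnNhd ℝ f Set.univ) {x₀ : E}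
    (h₀ : f x₀ ≠ 0) : ∀ᵐ x ∂μ, f x ≠ 0 := by
  have hfc : Continuous f := by
    rw [← continuousOn_univ]; exact hf.continuousOn
  have hmeas : MeasurableSet {p : E × ℝ | ¬ f (x₀ + p.2 • p.1) ≠ 0} := by
    have : IsClosed {p : E × ℝ | f (x₀ + p.2 • p.1) = 0} :=
      isClosed_eq (by fun_prop) continuous_const
    simpa using this.measurableSet
  have hlines : ∀ x : E, ∀ᵐ s : ℝ, f (x₀ + s • x) ≠ 0 := by
    intro x
    have hg : AnalyticOnNhd ℝ (fun s : ℝ => f (x₀ + s • x)) Set.univ := by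
      intro s _
      have h1 : AnalyticAt ℝ f ((fun s : ℝ => x₀ + s • x) s) := hf _ (Set.mem_univ _)
      have h2 : AnalyticAt ℝ (fun s : ℝ => x₀ + s • x) s := by fun_prop
      exact AnalyticAt.comp (g := f) (f := fun s : ℝ => x₀ + s • x) h1 h2
    have := hg.preimage_zero_mem_codiscrete (x := 0) (by simpa using h₀)
    have h3 := ae_restrict_le_codiscreteWithin (μ := (volume : Measure ℝ)) MeasurableSet.univ this
    rw [Measure.restrict_univ] at h3
    filter_upwards [h3] with s hs
    simpa using hs
  have hprod : ∀ᵐ p : E × ℝ ∂(μ.prod volume), f (x₀ + p.2 • p.1) ≠ 0 := by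
    rw [ae_iff, Measure.measure_prod_null hmeas]
    filter_upwards with x
    exact ae_iff.mp (hlines x)
  have hswap : ∀ᵐ p : ℝ × E ∂((volume : Measure ℝ).prod μ), f (x₀ + p.1 • p.2) ≠ 0 :=
    Measure.measurePreserving_swap.quasiMeasurePreserving.ae hprod
  have hs := Measure.ae_ae_of_ae_prod hswap
  have hne : ∀ᵐ s : ℝ, s ≠ 0 := by
    simp [ae_iff]
  obtain ⟨s, hs, hs0⟩ := (hs.and hne).exists
  have hnull : μ ((fun x => s • x) ⁻¹' {y | f (x₀ + y) = 0}) = 0 := by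
    simpa [ae_iff] using hs
  rw [Measure.addHaar_preimage_smul μ hs0] at hnull
  have hpos : ENNReal.ofReal |(s ^ Module.finrank ℝ E)⁻¹| ≠ 0 := by
    simp [hs0]
  have h4 : μ ((fun y => x₀ + y) ⁻¹' {y | f y = 0}) = 0 :=
    (mul_eq_zero.mp hnull).resolve_left hpos
  rw [measure_preimage_add] at h4
  simpa [ae_iff] using h4

/-- The Gram determinant of an injective real matrix is nonzero, and conversely. -/
theorem injective_mulVec_iff_det_gram_ne_zero {κ ι : Type*} [Fintype κ] [Fintype ι]
    [DecidableEq ι] (T : Matrix κ ι ℝ) :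
    Function.Injective T.mulVec ↔ (Tᵀ * T).det ≠ 0 := by
  constructor
  · intro h
    have := (Matrix.PosDef.conjTranspose_mul_self T h).det_pos
    rw [Matrix.conjTranspose_eq_transpose_of_trivial] at this
    exact this.ne'
  · intro h v w hvw
    have hu : IsUnit (Tᵀ * T) := (Matrix.isUnit_iff_isUnit_det _).2 (isUnit_iff_ne_zero.2 h)
    apply Matrix.mulVec_injective_of_isUnit hu
    simp only [← Matrix.mulVec_mulVec]
    exact congrArg _ hvw

theorem analyticOnNhd_det_gram {E κ ι : Type*} [NormedAddCommGroup E] [NormedSpace ℝ E] [Fintype κ] [Fintype ι] [DecidableEq ι]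
    {T : E → Matrix κ ι ℝ} (hT : ∀ i j, AnalyticOnNhd ℝ (fun x => T x i j) Set.univ) :
    AnalyticOnNhd ℝ (fun x => ((T x)ᵀ * T x).det) Set.univ := by
  simp only [Matrix.det_apply', Matrix.mul_apply, Matrix.transpose_apply]
  intro x hx
  refine Finset.analyticAt_fun_sum _ fun σ _ => analyticAt_const.mul ?_
  refine Finset.analyticAt_fun_prod _ fun i _ => Finset.analyticAt_fun_sum _ fun j _ => ?_
  exact (hT _ _ x hx).mul (hT _ _ x hx)

/-- An analytic family of matrices that is injective at one point is injective almost
everywhere. -/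
theorem ae_injective_mulVec {κ ι : Type*} [Fintype κ] [Fintype ι]
    {T : E → Matrix κ ι ℝ} (hT : ∀ i j, AnalyticOnNhd ℝ (fun x => T x i j) Set.univ) {x₀ : E}
    (h₀ : Function.Injective (T x₀).mulVec) :
    ∀ᵐ x ∂μ, Function.Injective (T x).mulVec := by
  classical
  simp only [injective_mulVec_iff_det_gram_ne_zero] at h₀ ⊢
  exact ae_ne_zero_of_analytic (analyticOnNhd_det_gram hT) h₀

end Analytic

/-- Almost-everywhere statements pull back along surjective linear maps. -/
theorem ae_comp_of_surjective {E F : Type*} [NormedAddCommGroup E] [NormedSpace ℝ E]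
    [FiniteDimensional ℝ E] [MeasurableSpace E] [BorelSpace E] [NormedAddCommGroup F]
    [NormedSpace ℝ F] [MeasurableSpace F] [BorelSpace F]
    {μ : Measure E} {ν : Measure F} [μ.IsAddHaarMeasure] [ν.IsAddHaarMeasure]
    (L : E →ₗ[ℝ] F) (hL : Function.Surjective L) {p : F → Prop} (h : ∀ᵐ y ∂ν, p y) :
    ∀ᵐ x ∂μ, p (L x) := by
  have : ProperSpace E := FiniteDimensional.proper ℝ E
  obtain ⟨s, hs, hsm, hs0⟩ := exists_measurable_superset_of_null (ae_iff.mp h)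
  have h1 : ∀ᵐ x ∂μ, L x ∈ sᶜ := by
    rw [ae_comp_linearMap_mem_iff L μ ν hL hsm.compl]
    exact (measure_eq_zero_iff_ae_notMem.mp hs0)
  filter_upwards [h1] with x hx
  by_contra hp
  exact hx (hs hp)

section MaximumLikelihood

variable {n : ℕ}

/-- Orthogonal diagonalization of real symmetric matrices. -/
theorem exists_orthogonal_diagonalization {ι : Type*} [Fintype ι] [DecidableEq ι]
    {N : Matrix ι ι ℝ} (hH : N.IsHermitian) :
    ∃ (U : Matrix ι ι ℝ), U * Uᵀ = 1 ∧ Uᵀ * U = 1 ∧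
      N = U * Matrix.diagonal hH.eigenvalues * Uᵀ := by
  refine ⟨(hH.eigenvectorUnitary : Matrix ι ι ℝ), ?_, ?_, ?_⟩
  · exact Unitary.mul_star_self_of_mem hH.eigenvectorUnitary.2
  · exact Unitary.star_mul_self_of_mem hH.eigenvectorUnitary.2
  · have := hH.spectral_theorem
    rw [Unitary.conjStarAlgAut_apply] at this
    exact this

theorem one_add_sum_le_prod_one_add {ι : Type*} (s : Finset ι) {f : ι → ℝ}
    (hf : ∀ i, 0 ≤ f i) : 1 + ∑ i ∈ s, f i ≤ ∏ i ∈ s, (1 + f i) := by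
  classical
  induction s using Finset.induction_on with
  | empty => simp
  | insert a s ha ih =>
    rw [Finset.sum_insert ha, Finset.prod_insert ha]
    have h1 : 0 ≤ ∑ i ∈ s, f i := Finset.sum_nonneg fun i _ => hf i
    nlinarith [hf a, mul_le_mul_of_nonneg_left ih (hf a), mul_nonneg (hf a) h1]

/-- `1 + tr N ≤ det (1 + N)` for positive semidefinite `N`. -/
theorem one_add_trace_le_det_one_add {ι : Type*} [Fintype ι] [DecidableEq ι] {N : Matrix ι ι ℝ}
    (hN : N.PosSemidef) : 1 + N.trace ≤ (1 + N).det := by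
  have hH := hN.isHermitian
  obtain ⟨U, hUU, -, hspec⟩ := exists_orthogonal_diagonalization hH
  have h1 : 1 + N = U * (1 + Matrix.diagonal hH.eigenvalues) * Uᵀ := by
    rw [mul_add, add_mul, ← hspec, mul_one, hUU]
  have hdet : (1 + N).det = ∏ i, (1 + hH.eigenvalues i) := by
    rw [h1, Matrix.det_mul_right_comm, hUU, one_mul, ← Matrix.diagonal_one,
      Matrix.diagonal_add, Matrix.det_diagonal]
  have htr : N.trace = ∑ i, hH.eigenvalues i := by
    simpa using hH.trace_eq_sum_eigenvalues
  rw [hdet, htr]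
  exact one_add_sum_le_prod_one_add _ hN.eigenvalues_nonneg

/-- A positive semidefinite matrix is of the form `C Cᵀ`. -/
theorem exists_eq_mul_transpose {ι : Type*} [Fintype ι] [DecidableEq ι] {K : Matrix ι ι ℝ}
    (hK : K.PosSemidef) : ∃ C : Matrix ι ι ℝ, K = C * Cᵀ := by
  obtain ⟨U, -, -, hspec⟩ := exists_orthogonal_diagonalization hK.isHermitian
  refine ⟨U * Matrix.diagonal fun i => Real.sqrt (hK.isHermitian.eigenvalues i), ?_⟩
  rw [Matrix.transpose_mul, Matrix.diagonal_transpose, ← Matrix.mul_assoc,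
    Matrix.mul_assoc U (Matrix.diagonal _), Matrix.diagonal_mul_diagonal]
  simp only [Real.mul_self_sqrt (hK.eigenvalues_nonneg _)]
  exact hspec

/-- Adding a nonzero positive semidefinite matrix to a positive definite one increases the
determinant. -/
theorem det_lt_det_add {K K₁ : Matrix (Fin n) (Fin n) ℝ} (hK : K.PosDef) (hK₁ : K₁.PosSemidef)
    (hne : K₁ ≠ 0) : K.det < (K + K₁).det := by
  obtain ⟨C, rfl⟩ := exists_eq_mul_transpose hK.posSemidef
  have hC : IsUnit C.det := by
    refine isUnit_iff_ne_zero.2 fun h => ?_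
    have := hK.det_pos
    simp [h] at this
  set N := C⁻¹ * K₁ * (C⁻¹)ᵀ with hN
  have hCN : C * N * Cᵀ = K₁ := by
    have hCt : (C⁻¹)ᵀ * Cᵀ = 1 := by
      rw [← Matrix.transpose_mul, Matrix.mul_nonsing_inv _ hC, Matrix.transpose_one]
    calc C * N * Cᵀ = (C * C⁻¹) * K₁ * ((C⁻¹)ᵀ * Cᵀ) := by simp only [hN, Matrix.mul_assoc]
      _ = K₁ := by rw [hCt, Matrix.mul_nonsing_inv _ hC, one_mul, mul_one]
  have hNpsd : N.PosSemidef := hK₁.mul_mul_conjTranspose_same C⁻¹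
  have htr : 0 < N.trace := by
    refine lt_of_le_of_ne hNpsd.trace_nonneg fun h => hne ?_
    rw [← hCN, hNpsd.trace_eq_zero_iff.1 h.symm, mul_zero, zero_mul]
  have hsum : C * Cᵀ + K₁ = C * (1 + N) * Cᵀ := by
    rw [mul_add, add_mul, mul_one, hCN]
  have h1 := one_add_trace_le_det_one_add hNpsd
  rw [hsum, Matrix.det_mul_right_comm, Matrix.det_mul (C * Cᵀ)]
  exact lt_mul_of_one_lt_right hK.det_pos (by linarith)

/-- If the model contains a direction of recession annihilating the data, there is no MLE. -/
theorem not_mleExists {e : ℕ} {L : Submodule ℝ (Matrix (Fin n) (Fin n) ℝ)}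
    {X : Matrix (Fin n) (Fin e) ℝ} {K₁ : Matrix (Fin n) (Fin n) ℝ} (hL : K₁ ∈ L)
    (hK₁ : K₁.PosSemidef) (hne : K₁ ≠ 0) (hX : K₁ * X = 0) :
    ¬ MLEExists (linearConcentrationModel L) (X * Xᵀ) := by
  rintro ⟨K, ⟨hKL, hK⟩, hmin⟩
  have h1 := hmin (K + K₁) ⟨L.add_mem hKL hL, hK.add_posSemidef hK₁⟩
  have htr : (X * Xᵀ * K₁).trace = 0 := by
    rw [Matrix.trace_mul_comm, ← Matrix.mul_assoc, hX, Matrix.zero_mul, Matrix.trace_zero]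
  have hlog : Real.log K.det < Real.log (K + K₁).det :=
    Real.log_lt_log hK.det_pos (det_lt_det_add hK hK₁ hne)
  simp only [mlObjective, mul_add, Matrix.trace_add, htr] at h1
  linarith

theorem posSemidef_abs_apply_le_trace {K : Matrix (Fin n) (Fin n) ℝ} (hK : K.PosSemidef)
    (i j : Fin n) : |K i j| ≤ K.trace := by
  have hsymm : K j i = K i j := by simpa using hK.isHermitian.apply i j
  have hdiag : ∀ i, K i i ≤ K.trace := fun i =>
    Finset.single_le_sum (f := fun i => K i i) (fun _ _ => hK.diag_nonneg) (Finset.mem_univ i)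
  have key : ∀ s : ℝ, 0 ≤ K i i + s * K i j + s * (K i j + s * K j j) := by
    intro s
    have := hK.dotProduct_mulVec_nonneg (Pi.single i 1 + s • Pi.single j 1)
    simp [Matrix.mulVec_add, Matrix.mulVec_smul, add_dotProduct, hsymm] at this
    linarith
  have h1 := key 1
  have h2 := key (-1)
  have h3 := hdiag i
  have h4 := hdiag j
  rw [abs_le]
  constructor <;> linarith

theorem posSemidef_det_le_trace_pow {K : Matrix (Fin n) (Fin n) ℝ} (hK : K.PosSemidef) :
    K.det ≤ K.trace ^ n := by
  have hH := hK.isHermitian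
  have hdet : K.det = ∏ i, hH.eigenvalues i := by simpa using hH.det_eq_prod_eigenvalues
  have htr : K.trace = ∑ i, hH.eigenvalues i := by simpa using hH.trace_eq_sum_eigenvalues
  rw [hdet, htr]
  calc ∏ i, hH.eigenvalues i ≤ ∏ _i : Fin n, ∑ j, hH.eigenvalues j :=
        Finset.prod_le_prod (fun i _ => hK.eigenvalues_nonneg i) fun i _ =>
          Finset.single_le_sum (f := hH.eigenvalues) (fun j _ => hK.eigenvalues_nonneg j)
            (Finset.mem_univ i)
    _ = _ := by simp

theorem isClosed_setOf_posSemidef : IsClosed {K : Matrix (Fin n) (Fin n) ℝ | K.PosSemidef} := by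
  simp only [Matrix.posSemidef_iff_dotProduct_mulVec, Set.ofPred_and, Set.ofPred_forall]
  refine IsClosed.inter (isClosed_eq (by fun_prop) (by fun_prop)) ?_
  exact isClosed_iInter fun x => isClosed_le continuous_const (by fun_prop)

/-- Positive semidefinite matrices with bounded trace form a bounded set. -/
theorem isCompact_of_subset_posSemidef {s : Set (Matrix (Fin n) (Fin n) ℝ)} (hs : IsClosed s)
    (hpsd : ∀ K ∈ s, K.PosSemidef) {R : ℝ} (hR : ∀ K ∈ s, K.trace ≤ R) : IsCompact s := by
  refine IsCompact.of_isClosed_subset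
    (isCompact_univ_pi fun _ : Fin n => isCompact_univ_pi fun _ : Fin n =>
      isCompact_Icc (a := -R) (b := R)) hs ?_
  intro K hK i _ j _
  exact abs_le.mp ((posSemidef_abs_apply_le_trace (hpsd K hK) i j).trans (hR K hK))

/-- If no nonzero element of the model's span annihilates the data, the MLE exists. -/
theorem mleExists_of_inf_ker {e : ℕ} {L : Submodule ℝ (Matrix (Fin n) (Fin n) ℝ)}
    {X : Matrix (Fin n) (Fin e) ℝ} {K₀ : Matrix (Fin n) (Fin n) ℝ} (hK₀L : K₀ ∈ L)
    (hK₀ : K₀.PosDef) (hX : ∀ K ∈ L, K * X = 0 → K = 0) :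
    MLEExists (linearConcentrationModel L) (X * Xᵀ) := by
  have hLc : IsClosed (L : Set (Matrix (Fin n) (Fin n) ℝ)) := L.closed_of_finiteDimensional
  have htr_nonneg : ∀ K : Matrix (Fin n) (Fin n) ℝ, K.PosSemidef → 0 ≤ (X * Xᵀ * K).trace := by
    intro K hK
    rw [Matrix.mul_assoc, Matrix.trace_mul_comm]
    simpa using (hK.conjTranspose_mul_mul_same X).trace_nonneg
  have htr_pos : ∀ K ∈ L, K.PosSemidef → K ≠ 0 → 0 < (X * Xᵀ * K).trace := by
    intro K hKL hK hne
    refine lt_of_le_of_ne (htr_nonneg K hK) fun h0 => hne (hX K hKL ?_)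
    have hpsd : (Xᵀ * K * X).PosSemidef := hK.conjTranspose_mul_mul_same X
    have h1 : Xᵀ * K * X = 0 := by
      rw [← hpsd.trace_eq_zero_iff, Matrix.mul_assoc, Matrix.trace_mul_comm, Matrix.mul_assoc,
        Matrix.trace_mul_comm, h0]
    ext i j
    have h2 : K *ᵥ (fun a => X a j) = 0 := by
      rw [← hK.dotProduct_mulVec_zero_iff]
      have := congrFun (congrFun h1 j) j
      rw [Matrix.mul_assoc] at this
      exact this
    exact congrFun h2 i
  have hcont : Continuous fun K : Matrix (Fin n) (Fin n) ℝ => (X * Xᵀ * K).trace := by fun_prop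
  obtain ⟨c, hc, hcoer⟩ : ∃ c > 0, ∀ K ∈ L, K.PosSemidef → c * K.trace ≤ (X * Xᵀ * K).trace := by
    set s : Set (Matrix (Fin n) (Fin n) ℝ) := {K | K ∈ L ∧ K.PosSemidef ∧ K.trace = 1} with hs
    have hsc : IsCompact s := by
      refine isCompact_of_subset_posSemidef ?_ (fun K hK => hK.2.1) (R := 1) fun K hK => hK.2.2.le
      exact hLc.inter (isClosed_setOf_posSemidef.inter
        (isClosed_eq (by fun_prop) continuous_const))
    have hnorm : ∀ K ∈ L, K.PosSemidef → K ≠ 0 → (K.trace)⁻¹ • K ∈ s := by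
      intro K hKL hK hne
      have h0 : K.trace ≠ 0 := fun h => hne (hK.trace_eq_zero_iff.1 h)
      refine ⟨L.smul_mem _ hKL, hK.smul (inv_nonneg.2 hK.trace_nonneg), ?_⟩
      rw [Matrix.trace_smul, smul_eq_mul, inv_mul_cancel₀ h0]
    rcases s.eq_empty_or_nonempty with hemp | hne
    · refine ⟨1, one_pos, fun K hKL hK => ?_⟩
      by_cases h0 : K = 0
      · simp [h0]
      · exact absurd (hnorm K hKL hK h0) (by simp [hemp])
    · obtain ⟨K₁, hK₁, hmin⟩ := hsc.exists_isMinOn hne hcont.continuousOn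
      have hK₁0 : K₁ ≠ 0 := by
        rintro rfl
        simpa using hK₁.2.2
      refine ⟨_, htr_pos K₁ hK₁.1 hK₁.2.1 hK₁0, fun K hKL hK => ?_⟩
      by_cases h0 : K = 0
      · simp [h0]
      have htr : 0 < K.trace := lt_of_le_of_ne hK.trace_nonneg fun h =>
        h0 (hK.trace_eq_zero_iff.1 h.symm)
      have := hmin (hnorm K hKL hK h0)
      simp only [Set.mem_ofPred_eq, Matrix.mul_smul, Matrix.trace_smul, smul_eq_mul] at this
      rwa [inv_mul_eq_div, le_div_iff₀ htr] at this
  set g₀ := mlObjective (X * Xᵀ) K₀ with hg₀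
  set R := 2 / c * (g₀ + n * Real.log (2 * n / c)) with hR
  set Ω : Set (Matrix (Fin n) (Fin n) ℝ) :=
    {K | K ∈ L ∧ K.PosSemidef ∧ K.trace ≤ R ∧ Real.exp (-g₀) ≤ K.det} with hΩ
  have hΩc : IsCompact Ω := by
    refine isCompact_of_subset_posSemidef ?_ (fun K hK => hK.2.1) (R := R) fun K hK => hK.2.2.1
    exact hLc.inter (isClosed_setOf_posSemidef.inter ((isClosed_le
      (f := fun K : Matrix (Fin n) (Fin n) ℝ => K.trace) (by fun_prop) continuous_const).inter
      (isClosed_le (g := fun K : Matrix (Fin n) (Fin n) ℝ => K.det) continuous_const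
        (by fun_prop))))
  have hΩpd : ∀ K ∈ Ω, K.PosDef := by
    intro K hK
    rw [hK.2.1.posDef_iff_det_ne_zero]
    exact ((Real.exp_pos _).trans_le hK.2.2.2).ne'
  have hsub : ∀ K ∈ L, K.PosDef → mlObjective (X * Xᵀ) K ≤ g₀ → K ∈ Ω := by
    intro K hKL hK hle
    refine ⟨hKL, hK.posSemidef, ?_, ?_⟩
    · have h1 := hcoer K hKL hK.posSemidef
      have h2 : Real.log K.det ≤ n * Real.log K.trace := by
        rw [← Real.log_pow]
        exact Real.log_le_log hK.det_pos (posSemidef_det_le_trace_pow hK.posSemidef)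
      have h3 : n * Real.log K.trace ≤ c * K.trace / 2 + n * Real.log (2 * n / c) := by
        rcases Nat.eq_zero_or_pos n with hn | hn
        · subst hn
          simp [Matrix.trace]
        · have : Nonempty (Fin n) := ⟨⟨0, hn⟩⟩
          have hn' : (0 : ℝ) < n := by exact_mod_cast hn
          have ht : 0 < K.trace := hK.trace_pos
          have h4 : Real.log K.trace =
              Real.log (c * K.trace / (2 * n)) + Real.log (2 * n / c) := by
            rw [← Real.log_mul (by positivity) (by positivity)]
            congr 1
            field_simp
          have h5 := Real.log_le_sub_one_of_pos (x := c * K.trace / (2 * n)) (by positivity)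
          have h6 : n * (c * K.trace / (2 * n)) = c * K.trace / 2 := by field_simp
          rw [h4, mul_add]
          nlinarith
      simp only [mlObjective] at hle
      rw [hR, div_mul_eq_mul_div, le_div_iff₀ hc]
      nlinarith
    · rw [← Real.le_log_iff_exp_le hK.det_pos]
      have := htr_nonneg K hK.posSemidef
      simp only [mlObjective] at hle
      linarith
  have hcontΩ : ContinuousOn (mlObjective (X * Xᵀ)) Ω := by
    refine hcont.continuousOn.sub (ContinuousOn.log (by fun_prop) fun K hK => ?_)
    exact (hΩpd K hK).det_pos.ne'
  have hK₀Ω : K₀ ∈ Ω := hsub K₀ hK₀L hK₀ le_rfl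
  obtain ⟨K, hK, hmin⟩ := hΩc.exists_isMinOn ⟨K₀, hK₀Ω⟩ hcontΩ
  refine ⟨K, ⟨hK.1, hΩpd K hK⟩, fun K' hK' => ?_⟩
  by_cases hle : mlObjective (X * Xᵀ) K' ≤ g₀
  · exact hmin (hsub K' hK'.1 hK'.2 hle)
  · exact (hmin hK₀Ω).trans (not_le.mp hle).le

end MaximumLikelihood

section SymmetricCoordinates

variable {n : ℕ}

@[simp] theorem symMatrixOf_apply (f : Sym2 (Fin n) → ℝ) (i j : Fin n) :
    symMatrixOf f i j = f s(i, j) := rfl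

theorem symMatrixOf_transpose (f : Sym2 (Fin n) → ℝ) : (symMatrixOf f)ᵀ = symMatrixOf f := by
  ext i j
  simp [Sym2.eq_swap]

@[simp] theorem symMatrixOf_add (f g : Sym2 (Fin n) → ℝ) :
    symMatrixOf (f + g) = symMatrixOf f + symMatrixOf g := rfl

@[simp] theorem symMatrixOf_smul (c : ℝ) (f : Sym2 (Fin n) → ℝ) :
    symMatrixOf (c • f) = c • symMatrixOf f := rfl

@[simp] theorem symMatrixOf_zero : symMatrixOf (0 : Sym2 (Fin n) → ℝ) = 0 := rfl

theorem symMatrixOf_sum {ι : Type*} (s : Finset ι) (f : ι → Sym2 (Fin n) → ℝ) :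
    symMatrixOf (∑ i ∈ s, f i) = ∑ i ∈ s, symMatrixOf (f i) := by
  ext a b
  simp [Matrix.sum_apply]

theorem symMatrixOf_injective : Function.Injective (symMatrixOf (n := n)) := by
  intro f g h
  ext s
  induction s using Sym2.ind with
  | _ i j => exact congrFun (congrFun h i) j

/-- The coordinate vector of a symmetric matrix, a one-sided inverse of `symMatrixOf`. -/
noncomputable def symVec (M : Matrix (Fin n) (Fin n) ℝ) : Sym2 (Fin n) → ℝ :=
  fun s => M (Quot.out s).1 (Quot.out s).2

theorem symVec_mk {M : Matrix (Fin n) (Fin n) ℝ} (hM : Mᵀ = M) (i j : Fin n) :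
    symVec M s(i, j) = M i j := by
  have h : s((Quot.out s(i, j)).1, (Quot.out s(i, j)).2) = s(i, j) := Quot.out_eq s(i, j)
  rw [Sym2.eq_iff] at h
  have hs : ∀ a b, M a b = M b a := fun a b => congrFun (congrFun hM b) a
  unfold symVec
  rcases h with ⟨h1, h2⟩ | ⟨h1, h2⟩
  · rw [h1, h2]
  · rw [h1, h2, hs]

theorem symMatrixOf_symVec {M : Matrix (Fin n) (Fin n) ℝ} (hM : Mᵀ = M) :
    symMatrixOf (symVec M) = M := by
  ext i j
  exact symVec_mk hM i j

/-- The matrix of the linear map `(a, t) ↦ Y a Yᵀ + ∑ i, t i • β i` on symmetric matrices `a`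
of size `q` and vectors `t` of length `k`. -/
noncomputable def symPencil {q k : ℕ} (β : Fin k → Sym2 (Fin n) → ℝ) (Y : Fin n → Fin q → ℝ) :
    Matrix (Sym2 (Fin n)) (Sym2 (Fin q) ⊕ Fin k) ℝ :=
  Matrix.of fun s => Sum.elim
    (fun u => symVec (Matrix.of Y * symMatrixOf (Pi.single u 1) * (Matrix.of Y)ᵀ) s)
    (fun i => β i s)

theorem congr_symm {q : ℕ} (Y : Matrix (Fin n) (Fin q) ℝ) (a : Sym2 (Fin q) → ℝ) :
    (Y * symMatrixOf a * Yᵀ)ᵀ = Y * symMatrixOf a * Yᵀ := by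
  rw [Matrix.transpose_mul, Matrix.transpose_mul, Matrix.transpose_transpose,
    symMatrixOf_transpose, Matrix.mul_assoc]

theorem symMatrixOf_symPencil_mulVec {q k : ℕ} (β : Fin k → Sym2 (Fin n) → ℝ)
    (Y : Fin n → Fin q → ℝ) (x : Sym2 (Fin q) ⊕ Fin k → ℝ) :
    symMatrixOf (symPencil β Y *ᵥ x) =
      Matrix.of Y * symMatrixOf (fun u => x (Sum.inl u)) * (Matrix.of Y)ᵀ +
        ∑ i, x (Sum.inr i) • symMatrixOf (β i) := by
  have hdecomp : symMatrixOf (fun u => x (Sum.inl u)) =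
      ∑ u, x (Sum.inl u) • symMatrixOf (Pi.single u (1 : ℝ)) := by
    simp only [← symMatrixOf_smul]
    rw [← symMatrixOf_sum]
    congr 1
    ext u
    simp [Finset.sum_apply, Pi.single_apply]
  have hvec : symPencil β Y *ᵥ x =
      ∑ u, x (Sum.inl u) •
        symVec (Matrix.of Y * symMatrixOf (Pi.single u 1) * (Matrix.of Y)ᵀ) +
      ∑ i, x (Sum.inr i) • β i := by
    ext s
    simp [Matrix.mulVec, dotProduct, symPencil, Finset.sum_apply, mul_comm]
  rw [hvec, symMatrixOf_add, symMatrixOf_sum, symMatrixOf_sum, hdecomp]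
  simp only [symMatrixOf_smul, symMatrixOf_symVec (congr_symm _ _), Matrix.mul_sum,
    Matrix.sum_mul, Matrix.mul_smul, Matrix.smul_mul]

theorem analyticOnNhd_symPencil {q k : ℕ} (s : Sym2 (Fin n)) (c : Sym2 (Fin q) ⊕ Fin k) :
    AnalyticOnNhd ℝ (fun p : (Fin k → Sym2 (Fin n) → ℝ) × (Fin n → Fin q → ℝ) =>
      symPencil p.1 p.2 s c) Set.univ := by
  refine contDiff_omega_iff_analyticOnNhd.1 ?_
  rcases c with u | i
  · simp only [symPencil, Matrix.of_apply, Sum.elim_inl, symVec, Matrix.mul_apply,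
      Matrix.transpose_apply, symMatrixOf_apply]
    fun_prop
  · simp only [symPencil, Matrix.of_apply, Sum.elim_inr]
    fun_prop

/-- The symmetric index pairs in `Fin (e + q)` that involve one of the first `e` indices. -/
def Touches (e q : ℕ) (s : Sym2 (Fin (e + q))) : Prop := ∃ i : Fin e, Fin.castAdd q i ∈ s

theorem not_touches_map (e q : ℕ) (u : Sym2 (Fin q)) :
    ¬ Touches e q (Sym2.map (Fin.natAdd e) u) := by
  rintro ⟨i, hi⟩
  rw [Sym2.mem_map] at hi
  obtain ⟨a, -, ha⟩ := hi
  have := congrArg Fin.val ha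
  simp at this
  omega

theorem exists_map_of_not_touches {e q : ℕ} {s : Sym2 (Fin (e + q))} (h : ¬ Touches e q s) :
    ∃ u, Sym2.map (Fin.natAdd e) u = s := by
  induction s using Sym2.ind with
  | _ i j =>
    have key : ∀ x ∈ s(i, j), ∃ a : Fin q, Fin.natAdd e a = x := by
      intro x hx
      induction x using Fin.addCases with
      | left a => exact absurd ⟨a, hx⟩ h
      | right a => exact ⟨a, rfl⟩
    obtain ⟨a, rfl⟩ := key i (by simp)
    obtain ⟨b, rfl⟩ := key j (by simp)
    exact ⟨s(a, b), by simp⟩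

open Classical in
theorem card_touches (e q : ℕ) :
    Fintype.card {s // Touches e q s} + Fintype.card (Sym2 (Fin q)) =
      Fintype.card (Sym2 (Fin (e + q))) := by
  suffices h : Fintype.card (Sym2 (Fin q)) = Fintype.card {s // ¬ Touches e q s} by
    rw [h, Fintype.card_subtype_compl]
    exact Nat.add_sub_cancel' (Fintype.card_subtype_le _)
  refine Fintype.card_congr (Equiv.ofBijective
    (fun u => ⟨Sym2.map (Fin.natAdd e) u, not_touches_map e q u⟩) ⟨?_, ?_⟩)
  · intro u v huv
    exact Sym2.map.injective (Fin.natAdd_injective q e) (congrArg Subtype.val huv)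
  · rintro ⟨s, hs⟩
    obtain ⟨u, hu⟩ := exists_map_of_not_touches hs
    exact ⟨u, Subtype.ext hu⟩

open Classical in
theorem card_touches_eq (e q : ℕ) :
    (Fintype.card {s // Touches e q s} : ℤ) =
      ((e + q : ℕ) : ℤ) * e - (e : ℤ) * ((e : ℤ) - 1) / 2 := by
  have h := card_touches e q
  rw [Sym2.card, Sym2.card, Fintype.card_fin, Fintype.card_fin, Nat.choose_two_right,
    Nat.choose_two_right, Nat.add_sub_cancel, Nat.add_sub_cancel] at h
  obtain ⟨u, hu⟩ := even_iff_two_dvd.1 (Nat.even_mul_pred_self (q + 1))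
  obtain ⟨v, hv⟩ := even_iff_two_dvd.1 (Nat.even_mul_pred_self (e + q + 1))
  obtain ⟨w, hw⟩ := even_iff_two_dvd.1 (Int.even_mul_pred_self (e : ℤ))
  rw [Nat.add_sub_cancel] at hu hv
  rw [hu, hv, Nat.mul_div_cancel_left _ two_pos, Nat.mul_div_cancel_left _ two_pos] at h
  rw [hw, Int.mul_ediv_cancel_left _ two_ne_zero]
  zify at h hu hv
  push_cast
  linarith

/-- For almost all data, a generic small linear system of symmetric matrices has no nonzero
element annihilating the data. -/
theorem ae_ae_mul_eq_zero {d q m : ℕ} (hm : ∃ σ : Fin m → Sym2 (Fin (d + q)),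
      Function.Injective σ ∧ ∀ i, Touches d q (σ i)) :
    ∀ᵐ b : Fin m → Sym2 (Fin (d + q)) → ℝ, ∀ᵐ X : Fin (d + q) → Fin d → ℝ,
      ∀ t : Fin m → ℝ, (∑ i, t i • symMatrixOf (b i)) * Matrix.of X = 0 → t = 0 := by
  obtain ⟨σ, hσ, hσt⟩ := hm
  let T : (Fin m → Sym2 (Fin (d + q)) → ℝ) × (Fin (d + q) → Fin d → ℝ) →
      Matrix (Fin (d + q) × Fin d) (Fin m) ℝ :=
    fun p => Matrix.of fun a i => (symMatrixOf (p.1 i) * Matrix.of p.2) a.1 a.2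
  have hTmul : ∀ p t a, (T p *ᵥ t) a =
      ((∑ i, t i • symMatrixOf (p.1 i)) * Matrix.of p.2) a.1 a.2 := by
    intro p t a
    simp [T, Matrix.mulVec, dotProduct, Matrix.sum_mul, Matrix.sum_apply, mul_comm]
  have hT : ∀ a i, AnalyticOnNhd ℝ (fun p => T p a i) Set.univ := by
    intro a i
    refine contDiff_omega_iff_analyticOnNhd.1 ?_
    simp only [T, Matrix.of_apply, Matrix.mul_apply, symMatrixOf_apply]
    fun_prop
  let b₀ : Fin m → Sym2 (Fin (d + q)) → ℝ := fun i => Pi.single (σ i) 1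
  let X₀ : Fin (d + q) → Fin d → ℝ := fun i j => if i = Fin.castAdd q j then 1 else 0
  have h₀ : Function.Injective (T (b₀, X₀)).mulVec := by
    rw [← Matrix.coe_mulVecLin, injective_iff_map_eq_zero]
    intro t ht
    ext i
    obtain ⟨c, y, hy⟩ := hσt i
    have := congrFun ht (y, c)
    rw [Matrix.mulVecLin_apply, hTmul] at this
    rw [Sym2.eq_swap] at hy
    simpa [Matrix.mul_apply, X₀, b₀, Matrix.sum_apply, Pi.single_apply, ← hy,
      hσ.eq_iff] using this
  have hae := ae_injective_mulVec (μ := volume) hT h₀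
  refine (Measure.ae_ae_of_ae_prod hae).mono fun b hb => hb.mono fun X hX t ht => ?_
  apply hX
  ext a
  rw [hTmul, ht]
  simp

/-- For almost all `β` and `Y`, the pencil is injective. -/
theorem ae_injective_symPencil {e q k : ℕ} (σ : Fin k ≃ {s // Touches e q s}) :
    ∀ᵐ p : (Fin k → Sym2 (Fin (e + q)) → ℝ) × (Fin (e + q) → Fin q → ℝ),
      Function.Injective (symPencil p.1 p.2).mulVec := by
  let β₀ : Fin k → Sym2 (Fin (e + q)) → ℝ := fun i => Pi.single (σ i).1 1
  let Y₀ : Fin (e + q) → Fin q → ℝ := fun i j => if i = Fin.natAdd e j then 1 else 0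
  refine ae_injective_mulVec (x₀ := (β₀, Y₀)) (fun s c => analyticOnNhd_symPencil s c) ?_
  rw [← Matrix.coe_mulVecLin, injective_iff_map_eq_zero]
  intro x hx
  rw [Matrix.mulVecLin_apply] at hx
  have hx' := symMatrixOf_symPencil_mulVec β₀ Y₀ x
  rw [hx, symMatrixOf_zero] at hx'
  have hentry : ∀ i j, (∑ a, ∑ b, if i = Fin.natAdd e b then
      (if j = Fin.natAdd e a then x (Sum.inl s(b, a)) else 0) else 0) +
      ∑ l, x (Sum.inr l) * β₀ l s(i, j) = 0 := by
    intro i j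
    have := congrFun (congrFun hx' i) j
    simp only [Matrix.zero_apply, Matrix.add_apply, Matrix.mul_apply, Matrix.of_apply,
      Matrix.transpose_apply, Matrix.sum_apply, Matrix.smul_apply, symMatrixOf_apply,
      smul_eq_mul] at this
    refine Eq.trans ?_ this.symm
    congr 1
    simp only [Finset.sum_mul]
    refine Finset.sum_congr rfl fun a _ => Finset.sum_congr rfl fun b _ => ?_
    simp only [Y₀]
    split_ifs <;> simp
  ext c
  rcases c with u | l
  · induction u using Sym2.ind with
    | _ a b =>
      have h := hentry (Fin.natAdd e a) (Fin.natAdd e b)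
      have h2 : ∀ l, β₀ l s(Fin.natAdd e a, Fin.natAdd e b) = 0 := by
        intro l
        refine Pi.single_eq_of_ne ?_ _
        intro hl
        exact not_touches_map e q s(a, b) (by rw [Sym2.map_mk]; exact hl ▸ (σ l).2)
      simpa [h2] using h
  · obtain ⟨c, y, hy⟩ := (σ l).2
    have h := hentry (Fin.castAdd q c) y
    have h1 : ∀ b : Fin q, Fin.castAdd q c ≠ Fin.natAdd e b := by
      intro b hb
      have := congrArg Fin.val hb
      simp at this
      omega
    have h3 : ∀ i, ((σ l).1 = (σ i).1) ↔ l = i := fun i => by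
      rw [Subtype.val_inj, σ.injective.eq_iff]
    simpa [h1, β₀, Pi.single_apply, ← hy, h3] using h

end SymmetricCoordinates

section LowRank

variable {n k : ℕ}

theorem symMatrixOf_isHermitian (f : Sym2 (Fin n) → ℝ) : (symMatrixOf f).IsHermitian := by
  rw [Matrix.IsHermitian, Matrix.conjTranspose_eq_transpose_of_trivial, symMatrixOf_transpose]

/-- A matrix `Y (1 - A / l) Yᵀ` with `l` a dominant eigenvalue of the `(r+1)`-square symmetric
matrix `A` can be written as `Z Zᵀ` with `Z` having `r` columns. -/
theorem exists_mul_transpose_of_dominant {r : ℕ} (Y : Matrix (Fin n) (Fin (r + 1)) ℝ)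
    {A : Matrix (Fin (r + 1)) (Fin (r + 1)) ℝ} (hA : A.IsHermitian) (hne : A ≠ 0) :
    ∃ (c : ℝ) (Z : Matrix (Fin n) (Fin r) ℝ), Z * Zᵀ = Y * Yᵀ - c • (Y * A * Yᵀ) := by
  obtain ⟨U, hUU, -, hspec⟩ := exists_orthogonal_diagonalization hA
  obtain ⟨i₀, -, hi₀⟩ := Finset.exists_max_image Finset.univ (fun i => |hA.eigenvalues i|)
    Finset.univ_nonempty
  have hl : hA.eigenvalues i₀ ≠ 0 := by
    intro h0
    apply hne
    have : hA.eigenvalues = 0 := by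
      ext i
      have := hi₀ i (Finset.mem_univ i)
      rw [h0, abs_zero] at this
      simpa using this
    rw [hspec, this]
    simp
  set l := hA.eigenvalues i₀ with hl_def
  set w : Fin (r + 1) → ℝ := fun i => 1 - l⁻¹ * hA.eigenvalues i with hw
  have hw0 : ∀ i, 0 ≤ w i := by
    intro i
    have h1 : l⁻¹ * hA.eigenvalues i ≤ 1 := by
      refine (le_abs_self _).trans ?_
      rw [abs_mul, abs_inv, inv_mul_le_iff₀ (abs_pos.2 hl), mul_one]
      exact hi₀ i (Finset.mem_univ i)
    simpa [hw] using h1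
  set D := Y * U * Matrix.diagonal (fun i => Real.sqrt (w i)) with hD
  have hcol : ∀ a, D a i₀ = 0 := by
    intro a
    rw [hD, Matrix.mul_diagonal]
    have : w i₀ = 0 := by simp [hw, ← hl_def, inv_mul_cancel₀ hl]
    simp [this]
  have hDD : D * Dᵀ = Y * Yᵀ - l⁻¹ • (Y * A * Yᵀ) := by
    have h1 : Matrix.diagonal w = 1 - l⁻¹ • Matrix.diagonal hA.eigenvalues := by
      rw [← Matrix.diagonal_one, ← Matrix.diagonal_smul, Matrix.diagonal_sub]
      rfl
    have h2 : D * Dᵀ = Y * U * Matrix.diagonal w * (Y * U)ᵀ := by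
      rw [hD, Matrix.transpose_mul, Matrix.diagonal_transpose, ← Matrix.mul_assoc,
        Matrix.mul_assoc (Y * U), Matrix.diagonal_mul_diagonal]
      simp only [Real.mul_self_sqrt (hw0 _)]
    have h3 : U * Matrix.diagonal w * Uᵀ = 1 - l⁻¹ • A := by
      rw [h1, mul_sub, sub_mul, mul_one, hUU, Matrix.mul_smul, Matrix.smul_mul, ← hspec]
    calc D * Dᵀ = Y * (U * Matrix.diagonal w * Uᵀ) * Yᵀ := by
          rw [h2, Matrix.transpose_mul]; simp only [Matrix.mul_assoc]
      _ = _ := by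
          rw [h3, Matrix.mul_sub, Matrix.sub_mul, Matrix.mul_one, Matrix.mul_smul,
            Matrix.smul_mul]
  refine ⟨l⁻¹, D.submatrix id i₀.succAbove, ?_⟩
  rw [← hDD]
  ext a b
  simp [Matrix.mul_apply, Fin.sum_univ_succAbove _ i₀, hcol]

/-- Adding zero columns does not change `Y Yᵀ`. -/
theorem exists_mul_transpose_of_le {r q : ℕ} (h : r ≤ q) (Y : Matrix (Fin n) (Fin r) ℝ) :
    ∃ Z : Matrix (Fin n) (Fin q) ℝ, Z * Zᵀ = Y * Yᵀ := by
  obtain ⟨p, rfl⟩ := Nat.exists_eq_add_of_le h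
  refine ⟨Matrix.of fun i => Fin.append (Y i) 0, ?_⟩
  ext a b
  simp [Matrix.mul_apply, Fin.sum_univ_add]

/-- In an affine space of symmetric matrices of small codimension through a positive
semidefinite matrix there is a positive semidefinite matrix of low rank. -/
theorem exists_low_rank {q : ℕ} {β : Fin k → Sym2 (Fin n) → ℝ} (hβ : LinearIndependent ℝ β)
    (hcard : Fintype.card (Sym2 (Fin n)) ≤ Fintype.card (Sym2 (Fin q)) + k)
    {B : Sym2 (Fin n) → ℝ} (hB : (symMatrixOf B).PosSemidef) :
    ∃ (Y : Matrix (Fin n) (Fin q) ℝ) (t : Fin k → ℝ),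
      Y * Yᵀ = symMatrixOf B + ∑ i, t i • symMatrixOf (β i) := by
  classical
  let P : ℕ → Prop := fun r => ∃ (Y : Matrix (Fin n) (Fin r) ℝ) (t : Fin k → ℝ),
    Y * Yᵀ = symMatrixOf B + ∑ i, t i • symMatrixOf (β i)
  have hP : ∃ r, P r := by
    obtain ⟨C, hC⟩ := exists_eq_mul_transpose hB
    exact ⟨n, C, 0, by simp [hC]⟩
  have hle : Nat.find hP ≤ q := by
    by_contra! hlt
    obtain ⟨r, hr⟩ : ∃ r, Nat.find hP = r + 1 := Nat.exists_eq_succ_of_ne_zero (by omega)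
    have hspec : P (r + 1) := hr ▸ Nat.find_spec hP
    have hmin : ¬ P r := Nat.find_min hP (by omega)
    obtain ⟨Y, t, hY⟩ := hspec
    have hfin : Module.finrank ℝ (Sym2 (Fin n) → ℝ) <
        Module.finrank ℝ (Sym2 (Fin (r + 1)) ⊕ Fin k → ℝ) := by
      rw [Module.finrank_fintype_fun_eq_card, Module.finrank_fintype_fun_eq_card,
        Fintype.card_sum, Fintype.card_fin]
      have h1 : Fintype.card (Sym2 (Fin q)) < Fintype.card (Sym2 (Fin (r + 1))) := by
        rw [Sym2.card, Sym2.card, Fintype.card_fin, Fintype.card_fin,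
          Nat.choose_succ_succ' (r + 1) 1, Nat.choose_one_right, show 1 + 1 = 2 from rfl]
        have := Nat.choose_le_choose 2 (show q + 1 ≤ r + 1 by omega)
        omega
      omega
    obtain ⟨x, hx, hx0⟩ := (Submodule.ne_bot_iff _).1
      (LinearMap.ker_ne_bot_of_finrank_lt (f := (symPencil β (Y : Fin n → _ → ℝ)).mulVecLin) hfin)
    rw [LinearMap.mem_ker, Matrix.mulVecLin_apply] at hx
    have hx' := symMatrixOf_symPencil_mulVec β (Y : Fin n → _ → ℝ) x
    rw [hx, symMatrixOf_zero] at hx'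
    set A := symMatrixOf (fun u => x (Sum.inl u)) with hA
    change 0 = Y * A * Yᵀ + _ at hx'
    have hA0 : A ≠ 0 := by
      intro h0
      apply hx0
      have h1 : (fun u => x (Sum.inl u)) = 0 := symMatrixOf_injective (by rw [← hA, h0]; rfl)
      rw [h0, Matrix.mul_zero, Matrix.zero_mul, zero_add] at hx'
      have h2 : ∑ i, x (Sum.inr i) • β i = 0 := by
        apply symMatrixOf_injective
        simp only [symMatrixOf_sum, symMatrixOf_smul, ← hx', symMatrixOf_zero]
      have h3 := Fintype.linearIndependent_iff.1 hβ _ h2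
      ext c
      rcases c with u | i
      · exact congrFun h1 u
      · exact h3 i
    obtain ⟨c, Z, hZ⟩ := exists_mul_transpose_of_dominant Y (A := A)
      (symMatrixOf_isHermitian _) hA0
    refine hmin ⟨Z, fun i => t i + c * x (Sum.inr i), ?_⟩
    have h4 : Y * A * Yᵀ = - ∑ i, x (Sum.inr i) • symMatrixOf (β i) :=
      eq_neg_of_add_eq_zero_left hx'.symm
    rw [hZ, hY, h4]
    simp only [add_smul, Finset.sum_add_distrib, mul_smul, Finset.smul_sum, smul_neg]
    abel
  obtain ⟨Y, t, hY⟩ := Nat.find_spec hP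
  obtain ⟨Z, hZ⟩ := exists_mul_transpose_of_le hle Y
  exact ⟨Z, t, hZ.trans hY⟩

end LowRank

section Transversality

variable {n k : ℕ}

/-- The coordinate projection of `Fin n → ℝ` onto the coordinates in `I`, as a matrix. -/
def coordProj (I : Finset (Fin n)) : Matrix (Fin n) (Fin n) ℝ :=
  Matrix.diagonal fun i => if i ∈ I then 1 else 0

theorem coordProj_transpose (I : Finset (Fin n)) : (coordProj I)ᵀ = coordProj I :=
  Matrix.diagonal_transpose _

theorem coordProj_mul_self (I : Finset (Fin n)) : coordProj I * coordProj I = coordProj I := by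
  simp [coordProj, Matrix.diagonal_mul_diagonal]

theorem coordProj_mul_compl (I : Finset (Fin n)) : coordProj I * coordProj Iᶜ = 0 := by
  rw [coordProj, coordProj, Matrix.diagonal_mul_diagonal, ← Matrix.diagonal_zero]
  congr 1
  ext i
  by_cases h : i ∈ I <;> simp [h]

theorem coordProj_compl_mul (I : Finset (Fin n)) : coordProj Iᶜ * coordProj I = 0 := by
  simpa using coordProj_mul_compl Iᶜ

theorem coordProj_add_compl (I : Finset (Fin n)) : coordProj I + coordProj Iᶜ = 1 := by
  rw [coordProj, coordProj, Matrix.diagonal_add, ← Matrix.diagonal_one]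
  congr 1
  ext i
  by_cases h : i ∈ I <;> simp [h]

/-- First component of the parametrization of pairs of symmetric matrices with product zero. -/
def chartLeft (I : Finset (Fin n)) (G : Matrix (Fin n) (Fin n) ℝ) : Matrix (Fin n) (Fin n) ℝ :=
  (coordProj I + coordProj I * G * coordProj Iᶜ)ᵀ * (coordProj I * G * coordProj I) *
    (coordProj I + coordProj I * G * coordProj Iᶜ)

/-- Second component of the parametrization of pairs of symmetric matrices with product
zero. -/
def chartRight (I : Finset (Fin n)) (G : Matrix (Fin n) (Fin n) ℝ) : Matrix (Fin n) (Fin n) ℝ :=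
  (coordProj Iᶜ - coordProj I * G * coordProj Iᶜ) * G *
    (coordProj Iᶜ - coordProj I * G * coordProj Iᶜ)ᵀ

/-- Every pair of symmetric matrices with product zero lies in one of the finitely many charts,
each of which is parametrized by a single symmetric matrix. -/
theorem exists_chart {A K : Matrix (Fin n) (Fin n) ℝ} (hA : Aᵀ = A) (hK : Kᵀ = K)
    (hAK : A * K = 0) :
    ∃ (I : Finset (Fin n)) (G : Matrix (Fin n) (Fin n) ℝ), Gᵀ = G ∧
      chartLeft I G = A ∧ chartRight I G = K := by
  classical
  obtain ⟨S, -, -, hspan, hli⟩ := exists_linearIndepOn_extension (K := ℝ)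
    (v := fun j : Fin n => fun i => A i j) (linearIndepOn_empty ℝ _) (Set.empty_subset Set.univ)
  obtain ⟨I, rfl⟩ : ∃ I : Finset (Fin n), (I : Set (Fin n)) = S := ⟨S.toFinset, by simp⟩
  have hcoef : ∀ j : Fin n, ∃ c : Fin n → ℝ, ∑ i ∈ I, c i • (fun x => A x i) = fun x => A x j := by
    intro j
    have := hspan ⟨j, Set.mem_univ j, rfl⟩
    obtain ⟨c, hc⟩ := (Submodule.mem_span_image_finset_iff_exists_fun ℝ).1 this
    refine ⟨fun i => if h : i ∈ I then c ⟨i, h⟩ else 0, ?_⟩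
    rw [← Finset.sum_coe_sort]
    refine Eq.trans ?_ hc
    simp
  choose c hc using hcoef
  set D := coordProj I with hD
  set Dc := coordProj Iᶜ with hDc
  have hDD : D * D = D := coordProj_mul_self I
  have hDcDc : Dc * Dc = Dc := coordProj_mul_self Iᶜ
  have hDDc : D * Dc = 0 := coordProj_mul_compl I
  have hDcD : Dc * D = 0 := coordProj_compl_mul I
  have hDt : Dᵀ = D := coordProj_transpose I
  have hDct : Dcᵀ = Dc := coordProj_transpose Iᶜ
  have hsum : D + Dc = 1 := coordProj_add_compl I
  have rDD : ∀ x, D * (D * x) = D * x := fun x => by rw [← mul_assoc, hDD]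
  have rDcDc : ∀ x, Dc * (Dc * x) = Dc * x := fun x => by rw [← mul_assoc, hDcDc]
  have rDDc : ∀ x, D * (Dc * x) = 0 := fun x => by rw [← mul_assoc, hDDc, zero_mul]
  have rDcD : ∀ x, Dc * (D * x) = 0 := fun x => by rw [← mul_assoc, hDcD, zero_mul]
  set Q₀ : Matrix (Fin n) (Fin n) ℝ := Matrix.of fun i j => c j i with hQ₀
  set Q := D * Q₀ * Dc with hQ
  set E := D + Q with hE
  have hAE : A * E = A := by
    ext x j
    have hAD : ∀ M : Matrix (Fin n) (Fin n) ℝ, ∀ y, (M * D) x y = if y ∈ I then M x y else 0 := by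
      intro M y
      simp [hD, coordProj, Matrix.mul_diagonal]
    by_cases hj : j ∈ I
    · have : (A * Q) x j = 0 := by
        rw [hQ, ← Matrix.mul_assoc, hDc, coordProj, Matrix.mul_diagonal]
        simp [hj]
      rw [hE, Matrix.mul_add, Matrix.add_apply, this, hAD, if_pos hj, add_zero]
    · have h1 : (A * Q) x j = ∑ i ∈ I, c j i * A x i := by
        rw [hQ, ← Matrix.mul_assoc, hDc, coordProj, Matrix.mul_diagonal]
        simp only [Finset.mem_compl, hj, not_false_eq_true, if_true, mul_one]
        rw [← Matrix.mul_assoc, Matrix.mul_apply]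
        simp [hAD, hQ₀, mul_comm]
      have h2 := congrFun (hc j) x
      rw [hE, Matrix.mul_add, Matrix.add_apply, h1, hAD, if_neg hj, zero_add, ← h2]
      simp [Finset.sum_apply]
  have hEA : Eᵀ * A = A := by
    have := congrArg Matrix.transpose hAE
    rwa [Matrix.transpose_mul, hA] at this
  have hDE : D * E = E := by
    rw [hE, hQ, mul_add, hDD]; simp only [mul_assoc, rDD]
  have hEK : E * K = 0 := by
    ext i y
    have hz : ∑ i ∈ I, (E * K) i y • (fun x => A x i) = 0 := by
      ext x
      have h1 : (A * (E * K)) x y = 0 := by rw [← mul_assoc, hAE, hAK]; rfl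
      rw [← hDE, Matrix.mul_assoc D, ← Matrix.mul_assoc A, Matrix.mul_apply] at h1
      simpa [hD, coordProj, Matrix.mul_diagonal, Finset.sum_apply, mul_comm] using h1
    by_cases hi : i ∈ I
    · exact linearIndepOn_finset_iff.1 hli _ hz i hi
    · rw [← hDE, Matrix.mul_assoc D, hD, coordProj, Matrix.diagonal_mul]
      simp [hi]
  have hFK : (Dc - Q) * K = K := by
    have h1 : D * K + Q * K = 0 := by rw [← add_mul]; exact hEK
    have h2 : D * K + Dc * K = K := by rw [← add_mul, hsum, one_mul]
    rw [sub_mul, eq_neg_of_add_eq_zero_right h1, sub_neg_eq_add, add_comm, h2]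
  have hKF : K * (Dc - Q)ᵀ = K := by
    have := congrArg Matrix.transpose hFK
    rwa [Matrix.transpose_mul, hK] at this
  have hQt : Qᵀ = Dc * Q₀ᵀ * D := by
    rw [hQ, Matrix.transpose_mul, Matrix.transpose_mul, hDt, hDct, mul_assoc]
  set G := D * A * D + Q + Qᵀ + Dc * K * Dc with hG
  have hDGDc : D * G * Dc = Q := by
    rw [hG, hQt, hQ]
    simp only [mul_add, add_mul, mul_assoc, rDD, rDDc, hDDc, hDcDc, mul_zero, zero_add, add_zero]
  have hDGD : D * G * D = D * A * D := by
    rw [hG, hQt, hQ]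
    simp only [mul_add, add_mul, mul_assoc, rDD, rDDc, hDD, hDcD, mul_zero, add_zero]
  have hDcGDc : Dc * G * Dc = Dc * K * Dc := by
    rw [hG, hQt, hQ]
    simp only [mul_add, add_mul, mul_assoc, rDcD, rDcDc, hDDc, hDcDc, mul_zero, zero_add,
      add_zero]
  refine ⟨I, G, ?_, ?_, ?_⟩
  · rw [hG]
    simp only [Matrix.transpose_add, Matrix.transpose_mul, Matrix.transpose_transpose, hDt, hDct,
      hA, hK, mul_assoc]
    abel
  · rw [chartLeft, ← hD, ← hDc, hDGDc, hDGD]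
    change Eᵀ * (D * A * D) * E = A
    have hED : Eᵀ * D = Eᵀ := by
      have := congrArg Matrix.transpose hDE
      rwa [Matrix.transpose_mul, hDt] at this
    calc Eᵀ * (D * A * D) * E = (Eᵀ * D) * A * (D * E) := by simp only [mul_assoc]
      _ = A := by rw [hED, hDE, hEA, hAE]
  · rw [chartRight, ← hD, ← hDc, hDGDc]
    have hFD : (Dc - Q) * Dc = Dc - Q := by
      rw [sub_mul, hDcDc, hQ, mul_assoc, hDcDc]
    have hDF : Dc * (Dc - Q)ᵀ = (Dc - Q)ᵀ := by
      have := congrArg Matrix.transpose hFD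
      rwa [Matrix.transpose_mul, hDct] at this
    calc (Dc - Q) * G * (Dc - Q)ᵀ = ((Dc - Q) * Dc) * G * (Dc * (Dc - Q)ᵀ) := by rw [hFD, hDF]
      _ = (Dc - Q) * (Dc * G * Dc) * (Dc - Q)ᵀ := by simp only [mul_assoc]
      _ = ((Dc - Q) * Dc) * K * (Dc * (Dc - Q)ᵀ) := by rw [hDcGDc]; simp only [mul_assoc]
      _ = K := by rw [hFD, hDF, hFK, hKF]

/-- The trace form on symmetric matrices. -/
noncomputable def symForm (n : ℕ) : LinearMap.BilinForm ℝ (Sym2 (Fin n) → ℝ) :=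
  LinearMap.mk₂ ℝ (fun a v => (symMatrixOf a * symMatrixOf v).trace)
    (fun a b v => by simp [add_mul]) (fun c a v => by simp)
    (fun a v w => by simp [mul_add]) (fun c a v => by simp)

theorem symForm_eq_trace (a v : Sym2 (Fin n) → ℝ) :
    symForm n a v = (symMatrixOf a * symMatrixOf v).trace := rfl

theorem symForm_eq_sum (a v : Sym2 (Fin n) → ℝ) :
    symForm n a v = ∑ i, ∑ j, a s(i, j) * v s(i, j) := by
  simp only [symForm_eq_trace, Matrix.trace, Matrix.diag, Matrix.mul_apply, symMatrixOf_apply]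
  exact Finset.sum_congr rfl fun i _ => Finset.sum_congr rfl fun j _ => by rw [Sym2.eq_swap (a := j)]

theorem symForm_comm (a v : Sym2 (Fin n) → ℝ) : symForm n a v = symForm n v a := by
  rw [symForm_eq_trace, Matrix.trace_mul_comm, symForm_eq_trace]

theorem symForm_self_eq_zero {a : Sym2 (Fin n) → ℝ} (h : symForm n a a = 0) : a = 0 := by
  rw [symForm_eq_sum, Finset.sum_eq_zero_iff_of_nonneg
    fun i _ => Finset.sum_nonneg fun j _ => mul_self_nonneg _] at h
  ext s
  induction s using Sym2.ind with
  | _ i j =>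
    have h1 := h i (Finset.mem_univ i)
    rw [Finset.sum_eq_zero_iff_of_nonneg fun j _ => mul_self_nonneg _] at h1
    exact mul_self_eq_zero.1 (h1 j (Finset.mem_univ j))

theorem exists_symForm_single_ne_zero {a : Sym2 (Fin n) → ℝ} (ha : a ≠ 0) :
    ∃ s, symForm n a (Pi.single s 1) ≠ 0 := by
  by_contra! h
  refine ha (symForm_self_eq_zero ?_)
  have : symForm n a = 0 := by
    refine LinearMap.pi_ext' fun s => LinearMap.ext_ring ?_
    simpa using h s
  rw [this]
  rfl

theorem contDiff_mul_apply {E : Type*} [NormedAddCommGroup E] [NormedSpace ℝ E]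
    {ι κ l : Type*} [Fintype κ] {N : WithTop ℕ∞} {A : E → Matrix ι κ ℝ} {B : E → Matrix κ l ℝ}
    (hA : ∀ i j, ContDiff ℝ N fun x => A x i j) (hB : ∀ i j, ContDiff ℝ N fun x => B x i j)
    (i : ι) (j : l) : ContDiff ℝ N fun x => (A x * B x) i j := by
  simp only [Matrix.mul_apply]
  fun_prop

theorem contDiff_symMatrixOf {N : WithTop ℕ∞} (i j : Fin n) :
    ContDiff ℝ N fun G : Sym2 (Fin n) → ℝ => symMatrixOf G i j := by
  simp only [symMatrixOf_apply]
  fun_prop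

theorem contDiff_coordProj_mul {N : WithTop ℕ∞} (I J : Finset (Fin n)) (i j : Fin n) :
    ContDiff ℝ N fun G : Sym2 (Fin n) → ℝ => (coordProj I * symMatrixOf G * coordProj J) i j :=
  contDiff_mul_apply (A := fun G => coordProj I * symMatrixOf G) (B := fun _ => coordProj J)
    (contDiff_mul_apply (A := fun _ => coordProj I) (B := symMatrixOf)
      (fun _ _ => contDiff_const) contDiff_symMatrixOf)
    (fun _ _ => contDiff_const) i j

theorem contDiff_chartLeft {N : WithTop ℕ∞} (I : Finset (Fin n)) :
    ContDiff ℝ N fun G : Sym2 (Fin n) → ℝ => symVec (chartLeft I (symMatrixOf G)) := by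
  refine contDiff_pi.2 fun s => ?_
  have h : ∀ i j, ContDiff ℝ N fun G : Sym2 (Fin n) → ℝ =>
      (coordProj I + coordProj I * symMatrixOf G * coordProj Iᶜ) i j :=
    fun i j => contDiff_const.add (contDiff_coordProj_mul I Iᶜ i j)
  exact contDiff_mul_apply (contDiff_mul_apply (fun i j => h j i) (contDiff_coordProj_mul I I)) h
    _ _

theorem contDiff_chartRight {N : WithTop ℕ∞} (I : Finset (Fin n)) :
    ContDiff ℝ N fun G : Sym2 (Fin n) → ℝ => symVec (chartRight I (symMatrixOf G)) := by
  refine contDiff_pi.2 fun s => ?_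
  have h : ∀ i j, ContDiff ℝ N fun G : Sym2 (Fin n) → ℝ =>
      (coordProj Iᶜ - coordProj I * symMatrixOf G * coordProj Iᶜ) i j :=
    fun i j => contDiff_const.sub (contDiff_coordProj_mul I Iᶜ i j)
  exact contDiff_mul_apply (contDiff_mul_apply h contDiff_symMatrixOf) (fun i j => h j i) _ _

/-- The coordinate `s` of `v` is replaced so as to make `v` orthogonal to `a`, provided that
`symForm n a (Pi.single s 1) = 1`. -/
noncomputable def orthoAdjust (s : Sym2 (Fin n)) (a v : Sym2 (Fin n) → ℝ) : Sym2 (Fin n) → ℝ :=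
  v - v s • Pi.single s 1 - symForm n a (v - v s • Pi.single s 1) • Pi.single s 1

/-- The map whose critical values are the non-transversal tuples. -/
noncomputable def transversalityMap (I : Finset (Fin n)) (s : Sym2 (Fin n))
    (p : (Fin k → Sym2 (Fin n) → ℝ) × (Sym2 (Fin n) → ℝ)) :
    (Fin k → Sym2 (Fin n) → ℝ) × (Sym2 (Fin n) → ℝ) :=
  (fun i => orthoAdjust s (symVec (chartLeft I (symMatrixOf p.2))) (p.1 i),
    symVec (chartRight I (symMatrixOf p.2)) -
      ∑ i, p.1 i s • orthoAdjust s (symVec (chartLeft I (symMatrixOf p.2))) (p.1 i))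

theorem differentiable_transversalityMap (I : Finset (Fin n)) (s : Sym2 (Fin n)) :
    Differentiable ℝ (transversalityMap (k := k) I s) := by
  have hL : Differentiable ℝ fun p : (Fin k → Sym2 (Fin n) → ℝ) × (Sym2 (Fin n) → ℝ) =>
      symVec (chartLeft I (symMatrixOf p.2)) :=
    ((contDiff_chartLeft (N := 1) I).differentiable one_ne_zero).comp differentiable_snd
  have hR : Differentiable ℝ fun p : (Fin k → Sym2 (Fin n) → ℝ) × (Sym2 (Fin n) → ℝ) =>
      symVec (chartRight I (symMatrixOf p.2)) :=
    ((contDiff_chartRight (N := 1) I).differentiable one_ne_zero).comp differentiable_snd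
  have hO : ∀ i, Differentiable ℝ fun p : (Fin k → Sym2 (Fin n) → ℝ) × (Sym2 (Fin n) → ℝ) =>
      orthoAdjust s (symVec (chartLeft I (symMatrixOf p.2))) (p.1 i) := by
    intro i
    simp only [orthoAdjust, symForm_eq_sum]
    have hL' := fun u => differentiable_pi.1 hL u
    simp only [Pi.sub_apply, Pi.smul_apply]
    fun_prop
  unfold transversalityMap
  fun_prop

/-- Generic linear systems of symmetric matrices are transversal to all rank strata. -/
theorem ae_transversal (n k : ℕ) :
    ∀ᵐ p : (Fin k → Sym2 (Fin n) → ℝ) × (Sym2 (Fin n) → ℝ), ∀ (t : Fin k → ℝ)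
      (a : Sym2 (Fin n) → ℝ), a ≠ 0 → (∀ i, symForm n a (p.1 i) = 0) →
        symMatrixOf a * symMatrixOf (p.2 + ∑ i, t i • p.1 i) ≠ 0 := by
  let N : Finset (Fin n) → Sym2 (Fin n) → Set ((Fin k → Sym2 (Fin n) → ℝ) × (Sym2 (Fin n) → ℝ)) :=
    fun I s => {p | symForm n (symVec (chartLeft I (symMatrixOf p.2))) (Pi.single s 1) = 1}
  have hN : ∀ I s, volume (transversalityMap I s '' N I s) = 0 := by
    intro I s
    refine addHaar_image_eq_zero_of_differentiableOn_of_addHaar_eq_zero volume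
      (differentiable_transversalityMap I s).differentiableOn ?_
    have han : AnalyticOnNhd ℝ (fun p : (Fin k → Sym2 (Fin n) → ℝ) × (Sym2 (Fin n) → ℝ) =>
        symForm n (symVec (chartLeft I (symMatrixOf p.2))) (Pi.single s 1) - 1) Set.univ := by
      refine contDiff_omega_iff_analyticOnNhd.1 ?_
      have hL : ∀ u, ContDiff ℝ ⊤ fun p : (Fin k → Sym2 (Fin n) → ℝ) × (Sym2 (Fin n) → ℝ) =>
          symVec (chartLeft I (symMatrixOf p.2)) u :=
        fun u => (contDiff_pi.1 (contDiff_chartLeft (n := n) (N := ⊤) I) u).comp contDiff_snd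
      simp only [symForm_eq_sum]
      fun_prop
    have := ae_ne_zero_of_analytic (μ := volume) han (x₀ := 0) (by
      have : symVec (chartLeft I (symMatrixOf (0 : Sym2 (Fin n) → ℝ))) = 0 := by
        ext u
        simp [symVec, chartLeft]
      rw [Prod.snd_zero, this]
      simp)
    rw [ae_iff] at this
    simpa [N, sub_eq_zero] using this
  have hunion : volume (⋃ I, ⋃ s, transversalityMap (k := k) I s '' N I s) = 0 :=
    measure_iUnion_null fun I => measure_iUnion_null fun s => hN I s
  filter_upwards [measure_eq_zero_iff_ae_notMem.1 hunion] with p hp t a ha hort hmul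
  apply hp
  obtain ⟨s, hs⟩ := exists_symForm_single_ne_zero ha
  set c := (symForm n a (Pi.single s 1))⁻¹ with hc
  obtain ⟨I, G, hG, hGL, hGR⟩ := exists_chart (A := symMatrixOf (c • a))
    (K := symMatrixOf (p.2 + ∑ i, t i • p.1 i)) (symMatrixOf_transpose _)
    (symMatrixOf_transpose _) (by rw [symMatrixOf_smul, smul_mul_assoc, hmul, smul_zero])
  have hvec : ∀ f : Sym2 (Fin n) → ℝ, symVec (symMatrixOf f) = f := fun f =>
    symMatrixOf_injective (symMatrixOf_symVec (symMatrixOf_transpose f))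
  have hL : symVec (chartLeft I (symMatrixOf (symVec G))) = c • a := by
    rw [symMatrixOf_symVec hG, hGL, hvec]
  have hR : symVec (chartRight I (symMatrixOf (symVec G))) = p.2 + ∑ i, t i • p.1 i := by
    rw [symMatrixOf_symVec hG, hGR, hvec]
  have hone : symForm n (c • a) (Pi.single s 1) = 1 := by
    rw [map_smul, LinearMap.smul_apply, smul_eq_mul, hc, inv_mul_cancel₀ hs]
  have hadj : ∀ i, orthoAdjust s (c • a) (Function.update (p.1 i) s (t i)) = p.1 i := by
    intro i
    have h1 : Function.update (p.1 i) s (t i) -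
        Function.update (p.1 i) s (t i) s • Pi.single s 1 = p.1 i - p.1 i s • Pi.single s 1 := by
      ext u
      by_cases hu : u = s
      · subst hu; simp
      · simp [hu]
    have h2 : symForm n (c • a) (p.1 i) = 0 := by simp [hort i]
    rw [orthoAdjust, h1, map_sub, h2, map_smul, hone]
    simp
  refine Set.mem_iUnion.2 ⟨I, Set.mem_iUnion.2 ⟨s,
    (fun i => Function.update (p.1 i) s (t i), symVec G), ?_, ?_⟩⟩
  · change symForm n (symVec (chartLeft I (symMatrixOf (symVec G)))) _ = 1
    rw [hL, hone]
  · simp only [transversalityMap, hL, hR, hadj, Function.update_self]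
    simp

end Transversality

section Multipliers

variable {n q k : ℕ}

theorem isCompl_symForm_orthogonal (S : Submodule ℝ (Sym2 (Fin n) → ℝ)) :
    IsCompl S ((symForm n).orthogonal S) := by
  rw [LinearMap.BilinForm.isCompl_orthogonal_iff_disjoint
    (fun a v h => by rw [symForm_comm, h]), Submodule.disjoint_def]
  intro a ha ha'
  exact symForm_self_eq_zero (ha' a ha)

theorem mem_symForm_orthogonal_span {β : Fin k → Sym2 (Fin n) → ℝ} {a : Sym2 (Fin n) → ℝ} :
    a ∈ (symForm n).orthogonal (Submodule.span ℝ (Set.range β)) ↔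
      ∀ i, symForm n a (β i) = 0 := by
  constructor
  · intro h i
    rw [symForm_comm]
    exact h _ (Submodule.subset_span ⟨i, rfl⟩)
  · intro h v hv
    have : Submodule.span ℝ (Set.range β) ≤ LinearMap.ker (symForm n a) := by
      rw [Submodule.span_le]
      rintro _ ⟨i, rfl⟩
      exact h i
    rw [symForm_comm]
    exact this hv

/-- Multiplier data: matrices `β`, coefficients `t`, a multiplier `a` orthogonal to `β` and a
matrix `Y` at which the pencil is not injective. -/
def degenerateMultipliers (n q k : ℕ) :
    Set ((Fin k → Sym2 (Fin n) → ℝ) × (Fin k → ℝ) × (Sym2 (Fin n) → ℝ) × (Fin n → Fin q → ℝ)) :=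
  {x | (∀ i, symForm n x.2.2.1 (x.1 i) = 0) ∧
    ¬ Function.Injective (symPencil x.1 x.2.2.2).mulVec}

/-- The system `B = Y Yᵀ - ∑ i, t i • β i`, `Y₁ = Y - a Y` of critical point equations for the
distance to `Y₁` on the matrices `Y` with `Y Yᵀ ∈ B + span β`. -/
noncomputable def multiplierMap
    (x : (Fin k → Sym2 (Fin n) → ℝ) × (Fin k → ℝ) × (Sym2 (Fin n) → ℝ) × (Fin n → Fin q → ℝ)) :
    (Fin k → Sym2 (Fin n) → ℝ) × (Sym2 (Fin n) → ℝ) × (Fin n → Fin q → ℝ) :=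
  (x.1, symVec (Matrix.of x.2.2.2 * (Matrix.of x.2.2.2)ᵀ) - ∑ i, x.2.1 i • x.1 i,
    fun i j => x.2.2.2 i j - (symMatrixOf x.2.2.1 * Matrix.of x.2.2.2) i j)

theorem isClosed_degenerateMultipliers : IsClosed (degenerateMultipliers n q k) := by
  simp only [degenerateMultipliers, Set.ofPred_and, Set.ofPred_forall]
  refine IsClosed.inter (isClosed_iInter fun i => ?_) ?_
  · simp only [symForm_eq_sum]
    exact isClosed_eq (by fun_prop) continuous_const
  · simp only [injective_mulVec_iff_det_gram_ne_zero, not_not]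
    have h := (analyticOnNhd_det_gram (analyticOnNhd_symPencil (n := n) (q := q) (k := k)))
    have hc : Continuous fun p : (Fin k → Sym2 (Fin n) → ℝ) × (Fin n → Fin q → ℝ) =>
        ((symPencil p.1 p.2)ᵀ * symPencil p.1 p.2).det := by
      rw [← continuousOn_univ]; exact h.continuousOn
    exact isClosed_eq (hc.comp (f := fun x : (Fin k → Sym2 (Fin n) → ℝ) × (Fin k → ℝ) ×
      (Sym2 (Fin n) → ℝ) × (Fin n → Fin q → ℝ) => (x.1, x.2.2.2)) (by fun_prop)) continuous_const

theorem continuous_multiplierMap : Continuous (multiplierMap (n := n) (q := q) (k := k)) := by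
  unfold multiplierMap
  simp only [Matrix.mul_apply, symMatrixOf_apply, Matrix.of_apply]
  refine continuous_fst.prodMk (Continuous.prodMk (Continuous.sub ?_ (by fun_prop)) (by fun_prop))
  refine continuous_pi fun s => ?_
  simp only [symVec, Matrix.mul_apply, Matrix.transpose_apply, Matrix.of_apply]
  fun_prop

theorem measurableSet_image_of_isClosed {E F : Type*} [TopologicalSpace E] [SigmaCompactSpace E]
    [TopologicalSpace F] [T2Space F] [MeasurableSpace F] [OpensMeasurableSpace F] {f : E → F}
    (hf : Continuous f) {s : Set E} (hs : IsClosed s) : MeasurableSet (f '' s) := by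
  obtain ⟨K, hK, hKs⟩ := (isSigmaCompact_univ.of_isClosed_subset hs (Set.subset_univ s)).image hf
  rw [← hKs]
  exact MeasurableSet.iUnion fun i => (hK i).measurableSet

/-- For fixed `β`, the degenerate critical point equations have only a null set of right-hand
sides. -/
theorem volume_multiplierMap_section {β : Fin k → Sym2 (Fin n) → ℝ}
    (hβ : ∀ᵐ Y : Fin n → Fin q → ℝ, Function.Injective (symPencil β Y).mulVec) :
    volume (Prod.mk β ⁻¹' (multiplierMap '' degenerateMultipliers n q k)) = 0 := by
  set S := Submodule.span ℝ (Set.range β) with hS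
  have hcompl := isCompl_symForm_orthogonal S
  set π := S.projection _ hcompl with hπ
  let Ψ : (Sym2 (Fin n) → ℝ) × (Fin n → Fin q → ℝ) → (Sym2 (Fin n) → ℝ) × (Fin n → Fin q → ℝ) :=
    fun p => (symVec (Matrix.of p.2 * (Matrix.of p.2)ᵀ) - π p.1,
      fun i j => p.2 i j - (symMatrixOf (p.1 - π p.1) * Matrix.of p.2) i j)
  let N : Set ((Sym2 (Fin n) → ℝ) × (Fin n → Fin q → ℝ)) :=
    Set.univ ×ˢ {Y | ¬ Function.Injective (symPencil β Y).mulVec}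
  have hN : volume N = 0 := by
    rw [Measure.volume_eq_prod, Measure.prod_prod, ae_iff.1 hβ, mul_zero]
  have hπd : Differentiable ℝ π := π.toContinuousLinearMap.differentiable
  have hΨ : Differentiable ℝ Ψ := by
    have h1 : Differentiable ℝ fun p : (Sym2 (Fin n) → ℝ) × (Fin n → Fin q → ℝ) => π p.1 :=
      hπd.comp differentiable_fst
    have h2 := fun u => differentiable_pi.1 h1 u
    refine Differentiable.prodMk (Differentiable.sub ?_ h1) ?_
    · refine differentiable_pi.2 fun s => ?_
      simp only [symVec, Matrix.mul_apply, Matrix.transpose_apply, Matrix.of_apply]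
      fun_prop
    · simp only [Matrix.mul_apply, symMatrixOf_apply, Matrix.of_apply, Pi.sub_apply]
      fun_prop
  refine measure_mono_null ?_ (addHaar_image_eq_zero_of_differentiableOn_of_addHaar_eq_zero
    volume hΨ.differentiableOn hN)
  rintro ⟨B, Y₁⟩ ⟨⟨β', t, a, Y⟩, ⟨hort, hdeg⟩, heq⟩
  obtain rfl : β' = β := congrArg Prod.fst heq
  have ha : a ∈ (symForm n).orthogonal S := mem_symForm_orthogonal_span.2 hort
  have hu : ∑ i, t i • β' i ∈ S :=
    S.sum_mem fun i _ => S.smul_mem _ (Submodule.subset_span ⟨i, rfl⟩)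
  have hπu : π (∑ i, t i • β' i + a) = ∑ i, t i • β' i := by
    rw [map_add, hπ, (Submodule.projection_apply_eq_zero_iff hcompl).2 ha, add_zero]
    exact Submodule.projection_apply_left hcompl ⟨_, hu⟩
  refine ⟨(∑ i, t i • β' i + a, Y), ⟨Set.mem_univ _, hdeg⟩, ?_⟩
  refine Eq.trans ?_ (congrArg Prod.snd heq)
  simp only [Ψ, hπu, add_sub_cancel_left, multiplierMap]

/-- For almost all `β`, `B` and `Y₁`, the critical point equations have no degenerate
solution. -/
theorem ae_notMem_multiplierMap_image
    (h : ∀ᵐ p : (Fin k → Sym2 (Fin n) → ℝ) × (Fin n → Fin q → ℝ),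
      Function.Injective (symPencil p.1 p.2).mulVec) :
    ∀ᵐ p : (Fin k → Sym2 (Fin n) → ℝ) × (Sym2 (Fin n) → ℝ), ∀ᵐ Y₁ : Fin n → Fin q → ℝ,
      (p.1, p.2, Y₁) ∉ multiplierMap '' degenerateMultipliers n q k := by
  have hmeas : MeasurableSet (multiplierMap '' degenerateMultipliers n q k) :=
    measurableSet_image_of_isClosed continuous_multiplierMap isClosed_degenerateMultipliers
  have hnull : volume (multiplierMap '' degenerateMultipliers n q k) = 0 := by
    rw [Measure.volume_eq_prod, Measure.measure_prod_null hmeas]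
    exact (Measure.ae_ae_of_ae_prod h).mono fun β hβ => volume_multiplierMap_section hβ
  have hae := measure_eq_zero_iff_ae_notMem.1 hnull
  exact Measure.ae_ae_of_ae_prod
    (volume_preserving_prodAssoc.quasiMeasurePreserving.ae hae)

theorem fderiv_apply_of_quadratic {E : Type*} [NormedAddCommGroup E] [NormedSpace ℝ E]
    {f : E → ℝ} {x v : E} (hf : DifferentiableAt ℝ f x) {b c : ℝ}
    (h : ∀ s : ℝ, f (x + s • v) = f x + s * b + s ^ 2 * c) : fderiv ℝ f x v = b := by
  have h1 := hf.hasFDerivAt.hasLineDerivAt v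
  have h2 : HasLineDerivAt ℝ f b x v := by
    rw [HasLineDerivAt]
    simp only [h]
    have : HasDerivAt (fun s : ℝ => f x + s * b + s ^ 2 * c)
        (0 + 1 * b + (2 : ℕ) * (0 : ℝ) ^ (2 - 1) * c) 0 :=
      (((hasDerivAt_const (0 : ℝ) (f x)).add ((hasDerivAt_id (0 : ℝ)).mul_const b)).add
        ((hasDerivAt_pow 2 (0 : ℝ)).mul_const c))
    simpa using this
  exact h1.unique h2

theorem symForm_symVec_gram (a : Sym2 (Fin n) → ℝ) (Y : Matrix (Fin n) (Fin q) ℝ) :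
    symForm n a (symVec (Y * Yᵀ)) = (symMatrixOf a * Y * Yᵀ).trace := by
  rw [symForm_eq_trace, symMatrixOf_symVec (by simp), Matrix.mul_assoc]

theorem trace_mul_transpose_eq_sum {ι κ : Type*} [Fintype ι] [Fintype κ] (U Z : Matrix ι κ ℝ) :
    (U * Zᵀ).trace = ∑ i, ∑ c, U i c * Z i c := by
  simp [Matrix.trace, Matrix.mul_apply]

theorem symForm_symVec_gram_add_smul (a : Sym2 (Fin n) → ℝ) (Y Z : Matrix (Fin n) (Fin q) ℝ)
    (s : ℝ) : symForm n a (symVec ((Y + s • Z) * (Y + s • Z)ᵀ)) =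
      symForm n a (symVec (Y * Yᵀ)) + s * (2 * (symMatrixOf a * Y * Zᵀ).trace) +
        s ^ 2 * symForm n a (symVec (Z * Zᵀ)) := by
  have hswap : (symMatrixOf a * Z * Yᵀ).trace = (symMatrixOf a * Y * Zᵀ).trace := by
    rw [← Matrix.trace_transpose, Matrix.transpose_mul, Matrix.transpose_mul,
      Matrix.transpose_transpose, symMatrixOf_transpose, ← Matrix.mul_assoc, Matrix.trace_mul_comm,
      ← Matrix.mul_assoc]
  rw [symForm_symVec_gram, symForm_symVec_gram, symForm_symVec_gram]
  simp only [Matrix.transpose_add, Matrix.transpose_smul, Matrix.mul_add,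
    Matrix.add_mul, Matrix.mul_smul, Matrix.smul_mul, Matrix.trace_add, Matrix.trace_smul,
    smul_eq_mul, hswap]
  ring

theorem contDiff_symForm_symVec_gram (a : Sym2 (Fin n) → ℝ) :
    ContDiff ℝ 1 fun Y : Fin n → Fin q → ℝ =>
      symForm n a (symVec (Matrix.of Y * (Matrix.of Y)ᵀ)) := by
  simp only [symForm_symVec_gram, trace_mul_transpose_eq_sum, Matrix.mul_apply, Matrix.of_apply]
  fun_prop

/-- A closed nonempty set of matrices contains a point nearest to a given one in the Frobenius
distance. -/
theorem exists_isMinOn_frobenius {F : Set (Fin n → Fin q → ℝ)} (hF : IsClosed F)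
    (hne : F.Nonempty) (Y₁ : Fin n → Fin q → ℝ) :
    ∃ Y ∈ F, IsMinOn (fun Y => ∑ i, ∑ c, (Y i c - Y₁ i c) ^ 2) F Y := by
  obtain ⟨Y₀, hY₀⟩ := hne
  set φ : (Fin n → Fin q → ℝ) → ℝ := fun Y => ∑ i, ∑ c, (Y i c - Y₁ i c) ^ 2 with hφ
  have hφc : Continuous φ := by fun_prop
  have hbound : ∀ Y i c, (Y i c - Y₁ i c) ^ 2 ≤ φ Y := by
    intro Y i c
    refine (Finset.single_le_sum (f := fun c => (Y i c - Y₁ i c) ^ 2)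
      (fun _ _ => sq_nonneg _) (Finset.mem_univ c)).trans ?_
    exact Finset.single_le_sum (f := fun i => ∑ c, (Y i c - Y₁ i c) ^ 2)
      (fun _ _ => Finset.sum_nonneg fun _ _ => sq_nonneg _) (Finset.mem_univ i)
  set R := Real.sqrt (φ Y₀) with hR
  have hcomp : IsCompact (F ∩ {Y | φ Y ≤ φ Y₀}) := by
    refine IsCompact.of_isClosed_subset
      (isCompact_univ_pi fun i => isCompact_univ_pi fun c =>
        isCompact_Icc (a := Y₁ i c - R) (b := Y₁ i c + R))
      (hF.inter (isClosed_le hφc continuous_const)) ?_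
    rintro Y ⟨-, hY⟩ i - c -
    have h1 : |Y i c - Y₁ i c| ≤ R := Real.abs_le_sqrt ((hbound Y i c).trans hY)
    rw [abs_le] at h1
    constructor <;> linarith [h1.1, h1.2]
  obtain ⟨Y, hY, hmin⟩ := hcomp.exists_isMinOn ⟨Y₀, hY₀, le_refl (φ Y₀)⟩ hφc.continuousOn
  refine ⟨Y, hY.1, fun Z hZ => ?_⟩
  by_cases hle : φ Z ≤ φ Y₀
  · exact hmin ⟨hZ, hle⟩
  · exact hY.2.trans (not_le.1 hle).le

/-- If `B` is generic with respect to `β` and `Y Yᵀ ∈ B + span β` is solvable, then it has a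
solution at which the pencil is injective. -/
theorem exists_injective_symPencil {β : Fin k → Sym2 (Fin n) → ℝ} {B : Sym2 (Fin n) → ℝ}
    (hsol : ∃ (Y : Matrix (Fin n) (Fin q) ℝ) (t : Fin k → ℝ),
      Y * Yᵀ = symMatrixOf B + ∑ i, t i • symMatrixOf (β i))
    (htrans : ∀ (t : Fin k → ℝ) (a : Sym2 (Fin n) → ℝ), a ≠ 0 →
      (∀ i, symForm n a (β i) = 0) → symMatrixOf a * symMatrixOf (B + ∑ i, t i • β i) ≠ 0)
    {Y₁ : Fin n → Fin q → ℝ}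
    (hY₁ : (β, B, Y₁) ∉ multiplierMap '' degenerateMultipliers n q k) :
    ∃ (Y : Fin n → Fin q → ℝ) (t : Fin k → ℝ),
      Matrix.of Y * (Matrix.of Y)ᵀ = symMatrixOf B + ∑ i, t i • symMatrixOf (β i) ∧
        Function.Injective (symPencil β Y).mulVec := by
  set S := Submodule.span ℝ (Set.range β) with hS
  set S' := (symForm n).orthogonal S with hS'
  have hcompl : IsCompl S S' := isCompl_symForm_orthogonal S
  let a := Module.finBasis ℝ S'
  let f : Fin (Module.finrank ℝ S') → (Fin n → Fin q → ℝ) → ℝ := fun j Y =>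
    symForm n (a j) (symVec (Matrix.of Y * (Matrix.of Y)ᵀ))
  set F : Set (Fin n → Fin q → ℝ) := {Y | ∀ j, f j Y = symForm n (a j) B} with hF
  have hFclosed : IsClosed F := by
    rw [hF, Set.ofPred_forall]
    exact isClosed_iInter fun j =>
      isClosed_eq (contDiff_symForm_symVec_gram _).continuous continuous_const
  have horth : ∀ j i, symForm n (a j) (β i) = 0 := fun j i =>
    mem_symForm_orthogonal_span.1 (a j).2 i
  have hFne : F.Nonempty := by
    obtain ⟨Y, t, hY⟩ := hsol
    refine ⟨fun i c => Y i c, fun j => ?_⟩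
    change symForm n (a j) (symVec (Y * Yᵀ)) = _
    have : symVec (Y * Yᵀ) = B + ∑ i, t i • β i := by
      apply symMatrixOf_injective
      rw [symMatrixOf_symVec (by simp), hY, symMatrixOf_add, symMatrixOf_sum]
      rfl
    rw [this, map_add, map_sum]
    simp [horth]
  obtain ⟨Y, hYF, hmin⟩ := exists_isMinOn_frobenius hFclosed hFne Y₁
  have hYsol : ∃ t : Fin k → ℝ, symVec (Matrix.of Y * (Matrix.of Y)ᵀ) = B + ∑ i, t i • β i := by
    set u := symVec (Matrix.of Y * (Matrix.of Y)ᵀ) - B with hu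
    have hu0 : ∀ v ∈ S', symForm n v u = 0 := by
      intro v hv
      have h1 : S' = Submodule.span ℝ (Set.range fun j => (a j : Sym2 (Fin n) → ℝ)) := by
        have := congrArg (Submodule.map S'.subtype) a.span_eq
        rw [Submodule.map_span, ← Set.range_comp, Submodule.map_subtype_top] at this
        exact this.symm
      have h2 : S' ≤ LinearMap.ker ((symForm n).flip u) := by
        rw [h1, Submodule.span_le]
        rintro _ ⟨j, rfl⟩
        change symForm n (a j) u = 0
        rw [hu, map_sub, sub_eq_zero]
        exact hYF j
      exact h2 hv
    obtain ⟨v, hv, w, hw, hvw⟩ := Submodule.mem_sup.1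
      (show u ∈ S ⊔ S' by rw [hcompl.sup_eq_top]; trivial)
    have hw0 : w = 0 := by
      apply symForm_self_eq_zero
      have h3 := hu0 w hw
      rwa [← hvw, map_add, symForm_comm w v, hw v hv, zero_add] at h3
    have huS : u ∈ S := by rw [← hvw, hw0, add_zero]; exact hv
    obtain ⟨t, ht⟩ := (Submodule.mem_span_range_iff_exists_fun ℝ).1 huS
    exact ⟨t, by rw [ht, hu]; abel⟩
  obtain ⟨t, ht⟩ := hYsol
  have hmat : Matrix.of Y * (Matrix.of Y)ᵀ = symMatrixOf (B + ∑ i, t i • β i) := by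
    rw [← ht, symMatrixOf_symVec (by simp)]
  refine ⟨Y, t, by rw [hmat, symMatrixOf_add, symMatrixOf_sum]; rfl, ?_⟩
  set φ : (Fin n → Fin q → ℝ) → ℝ := fun Y => ∑ i, ∑ c, (Y i c - Y₁ i c) ^ 2 with hφ
  have hφd : ContDiff ℝ 1 φ := by fun_prop
  have hextr : IsLocalExtrOn φ {Z | ∀ j, f j Z = f j Y} Y := by
    refine Or.inl (IsMinOn.localize fun Z hZ => hmin ?_)
    intro j
    rw [hZ j, hYF j]
  obtain ⟨Λ, Λ₀, hΛ, hmult⟩ := hextr.exists_multipliers_of_hasStrictFDerivAt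
    (fun j => (contDiff_symForm_symVec_gram (a j : Sym2 (Fin n) → ℝ)).contDiffAt.hasStrictFDerivAt
      one_ne_zero)
    (hφd.contDiffAt.hasStrictFDerivAt one_ne_zero)
  have hφ' : ∀ Z, fderiv ℝ φ Y Z = 2 * ∑ i, ∑ c, (Y i c - Y₁ i c) * Z i c := by
    intro Z
    refine fderiv_apply_of_quadratic (hφd.differentiable one_ne_zero Y)
      (c := ∑ i, ∑ c, Z i c ^ 2) fun s => ?_
    simp only [hφ, Finset.mul_sum, ← Finset.sum_add_distrib, Pi.add_apply, Pi.smul_apply,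
      smul_eq_mul]
    exact Finset.sum_congr rfl fun i _ => Finset.sum_congr rfl fun c _ => by ring
  have hf' : ∀ j Z, fderiv ℝ (f j) Y Z =
      2 * (symMatrixOf (a j : Sym2 (Fin n) → ℝ) * Matrix.of Y * (Matrix.of Z)ᵀ).trace := by
    intro j Z
    exact fderiv_apply_of_quadratic
      ((contDiff_symForm_symVec_gram (a j : Sym2 (Fin n) → ℝ)).differentiable one_ne_zero Y)
      fun s => symForm_symVec_gram_add_smul (a j) (Matrix.of Y) (Matrix.of Z) s
  set v : S' := ∑ j, Λ j • a j with hv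
  have hstat : ∀ i c, (symMatrixOf (v : Sym2 (Fin n) → ℝ) * Matrix.of Y) i c +
      Λ₀ * (Y i c - Y₁ i c) = 0 := by
    intro i c
    have hsymv : symMatrixOf (v : Sym2 (Fin n) → ℝ) =
        ∑ j, Λ j • symMatrixOf (a j : Sym2 (Fin n) → ℝ) := by
      rw [hv, Submodule.coe_sum, symMatrixOf_sum]
      rfl
    have h1 := DFunLike.congr_fun hmult (Pi.single i (Pi.single c 1))
    simp only [add_apply, sum_apply,
      smul_apply, zero_apply, smul_eq_mul] at h1
    rw [hφ'] at h1
    have hU : ∀ U : Fin n → Fin q → ℝ,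
        ∑ x, ∑ y, U x y * (Pi.single i (Pi.single c 1) : Fin n → Fin q → ℝ) x y = U i c := by
      intro U
      rw [Finset.sum_eq_single i (fun x _ hx => by simp [hx]) (by simp),
        Finset.sum_eq_single c (fun y _ hy => by simp [hy]) (by simp)]
      simp
    have h2 : ∀ j, fderiv ℝ (f j) Y (Pi.single i (Pi.single c 1)) =
        2 * (symMatrixOf (a j : Sym2 (Fin n) → ℝ) * Matrix.of Y) i c := by
      intro j
      rw [hf', trace_mul_transpose_eq_sum]
      exact congrArg _ (hU _)
    rw [hU fun x y => Y x y - Y₁ x y] at h1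
    rw [hsymv, Matrix.sum_mul, Matrix.sum_apply]
    simp only [Matrix.smul_mul, Matrix.smul_apply, smul_eq_mul]
    have h3 : ∑ j, Λ j * (2 * (symMatrixOf (a j : Sym2 (Fin n) → ℝ) * Matrix.of Y) i c) =
        2 * ∑ j, Λ j * (symMatrixOf (a j : Sym2 (Fin n) → ℝ) * Matrix.of Y) i c := by
      rw [Finset.mul_sum]
      exact Finset.sum_congr rfl fun j _ => by ring
    have h4 : ∑ j, Λ j * fderiv ℝ (f j) Y (Pi.single i (Pi.single c 1)) =
        ∑ j, Λ j * (2 * (symMatrixOf (a j : Sym2 (Fin n) → ℝ) * Matrix.of Y) i c) :=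
      Finset.sum_congr rfl fun j _ => by rw [h2]
    have h5 := h4.symm.trans (eq_neg_of_add_eq_zero_left h1)
    linarith
  have hvort : ∀ i, symForm n (v : Sym2 (Fin n) → ℝ) (β i) = 0 :=
    mem_symForm_orthogonal_span.1 v.2
  by_cases h0 : Λ₀ = 0
  · exfalso
    have hv0 : (v : Sym2 (Fin n) → ℝ) ≠ 0 := by
      intro hz
      have hz' : v = 0 := Subtype.ext hz
      apply hΛ
      rw [h0]
      have := Fintype.linearIndependent_iff.1 a.linearIndependent Λ hz'
      exact Prod.ext (funext this) rfl
    refine htrans t v hv0 hvort ?_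
    rw [← hmat, ← Matrix.mul_assoc]
    have : symMatrixOf (v : Sym2 (Fin n) → ℝ) * Matrix.of Y = 0 := by
      ext i c
      simpa [h0] using hstat i c
    rw [this, Matrix.zero_mul]
  · by_contra hdeg
    refine hY₁ ⟨(β, t, (-Λ₀⁻¹) • (v : Sym2 (Fin n) → ℝ), Y), ⟨fun i => ?_, hdeg⟩, ?_⟩
    · change symForm n ((-Λ₀⁻¹) • (v : Sym2 (Fin n) → ℝ)) (β i) = 0
      rw [map_smul, LinearMap.smul_apply, hvort, smul_zero]
    · simp only [multiplierMap, ht, add_sub_cancel_right]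
      congr 2
      ext i c
      have := hstat i c
      simp only [symMatrixOf_smul, Matrix.smul_mul, Matrix.smul_apply, smul_eq_mul]
      field_simp
      linarith

end Multipliers

section Openness

open Filter Topology

variable {n q k e : ℕ}

/-- A symmetric matrix entrywise close to the identity is positive definite. -/
theorem posDef_of_close_to_one {A : Matrix (Fin q) (Fin q) ℝ} (hA : A.IsHermitian)
    (h : ∀ i j, |A i j - (1 : Matrix (Fin q) (Fin q) ℝ) i j| ≤ ((q : ℝ) + 1)⁻¹) : A.PosDef := by
  refine Matrix.PosDef.of_dotProduct_mulVec_pos hA fun x hx => ?_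
  set ε := ((q : ℝ) + 1)⁻¹ with hε
  set N := ∑ i, x i ^ 2 with hN
  have hN0 : 0 < N := by
    refine lt_of_le_of_ne (Finset.sum_nonneg fun i _ => sq_nonneg _) fun h0 => hx ?_
    ext i
    have := (Finset.sum_eq_zero_iff_of_nonneg fun i _ => sq_nonneg (x i)).1 h0.symm i
      (Finset.mem_univ i)
    simpa using this
  have hone : ∑ i, ∑ j, x i * ((1 : Matrix (Fin q) (Fin q) ℝ) i j * x j) = N := by
    simp [Matrix.one_apply, hN, sq]
  have hterm : ∀ i j, x i * ((1 : Matrix (Fin q) (Fin q) ℝ) i j * x j) - ε * ((x i ^ 2 + x j ^ 2) / 2)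
      ≤ x i * (A i j * x j) := by
    intro i j
    have h1 : |x i * x j| ≤ (x i ^ 2 + x j ^ 2) / 2 := by
      rw [abs_le]
      constructor <;> nlinarith [sq_nonneg (x i + x j), sq_nonneg (x i - x j)]
    have h2 : |(A i j - (1 : Matrix (Fin q) (Fin q) ℝ) i j) * (x i * x j)| ≤
        ε * ((x i ^ 2 + x j ^ 2) / 2) := by
      rw [abs_mul]
      exact mul_le_mul (h i j) h1 (abs_nonneg _) (by positivity)
    nlinarith [(abs_le.1 h2).1]
  have hsum := Finset.sum_le_sum fun i (_ : i ∈ Finset.univ) =>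
    Finset.sum_le_sum fun j (_ : j ∈ Finset.univ) => hterm i j
  have hlow : ∑ i, ∑ j, (x i * ((1 : Matrix (Fin q) (Fin q) ℝ) i j * x j) -
      ε * ((x i ^ 2 + x j ^ 2) / 2)) = N - ε * (q * N) := by
    simp only [Finset.sum_sub_distrib]
    rw [hone]
    congr 1
    simp only [← Finset.mul_sum, ← Finset.sum_div, Finset.sum_add_distrib]
    simp only [Finset.sum_const, Finset.card_univ, Fintype.card_fin, nsmul_eq_mul, ← hN]
    rw [← Finset.mul_sum, ← hN]
    ring
  have hεq : ε * (q * N) < N := by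
    have : ε * (q + 1) = 1 := inv_mul_cancel₀ (by positivity)
    have hε0 : 0 < ε := by positivity
    nlinarith [mul_pos hε0 hN0]
  have hgoal : star x ⬝ᵥ A *ᵥ x = ∑ i, ∑ j, x i * (A i j * x j) := by
    simp [dotProduct, Matrix.mulVec, Finset.mul_sum]
  rw [hgoal]
  linarith

theorem continuousAt_inv_of_det_ne_zero {T ι : Type*} [TopologicalSpace T] [Fintype ι] [DecidableEq ι]
    {M : T → Matrix ι ι ℝ} (hM : Continuous M) {x : T} (hx : (M x).det ≠ 0) :
    ContinuousAt (fun z => (M z)⁻¹) x := by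
  have h1 : (fun z => (M z)⁻¹) = fun z => ((M z).det)⁻¹ • (M z).adjugate := by
    ext1 z
    rw [Matrix.inv_def, Ring.inverse_eq_inv']
  rw [h1]
  exact (hM.matrix_det.continuousAt.inv₀ hx).smul hM.matrix_adjugate.continuousAt

/-- The columns of `Y`, made orthogonal to those of `X`. -/
noncomputable def rejectColumns (Y : Matrix (Fin n) (Fin q) ℝ) (X : Matrix (Fin n) (Fin e) ℝ) :
    Matrix (Fin n) (Fin q) ℝ :=
  Y - X * (Xᵀ * X)⁻¹ * (Xᵀ * Y)

theorem continuousAt_rejectColumns (Y : Matrix (Fin n) (Fin q) ℝ)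
    {X : Matrix (Fin n) (Fin e) ℝ} (hX : (Xᵀ * X).det ≠ 0) :
    ContinuousAt (rejectColumns Y) X := by
  have h1 : ContinuousAt (fun X : Matrix (Fin n) (Fin e) ℝ => (Xᵀ * X)⁻¹) X :=
    continuousAt_inv_of_det_ne_zero (by fun_prop) hX
  have hmul : Continuous fun p : Matrix (Fin n) (Fin e) ℝ × Matrix (Fin e) (Fin e) ℝ =>
      Y - p.1 * p.2 * (p.1ᵀ * Y) := by fun_prop
  exact ContinuousAt.comp (f := fun X : Matrix (Fin n) (Fin e) ℝ => (X, (Xᵀ * X)⁻¹))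
    hmul.continuousAt (continuousAt_id.prodMk h1)

theorem transpose_mul_rejectColumns (Y : Matrix (Fin n) (Fin q) ℝ)
    {X : Matrix (Fin n) (Fin e) ℝ} (hX : (Xᵀ * X).det ≠ 0) : Xᵀ * rejectColumns Y X = 0 := by
  rw [rejectColumns, Matrix.mul_sub, Matrix.mul_assoc X, ← Matrix.mul_assoc Xᵀ X,
    Matrix.mul_nonsing_inv_cancel_left _ _ (isUnit_iff_ne_zero.2 hX), sub_self]

/-- The columns of a tall matrix can be complemented by orthogonal ones. -/
theorem exists_orthogonal_columns (Y : Matrix (Fin n) (Fin q) ℝ) (hn : e + q ≤ n) :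
    ∃ X : Matrix (Fin n) (Fin e) ℝ, Xᵀ * Y = 0 ∧ (Xᵀ * X).det ≠ 0 := by
  have hker : e ≤ Module.finrank ℝ (LinearMap.ker (Yᵀ).mulVecLin) := by
    have h1 := LinearMap.finrank_range_add_finrank_ker (Yᵀ).mulVecLin
    have h2 : Module.finrank ℝ (LinearMap.range (Yᵀ).mulVecLin) ≤ q := by
      simpa using Submodule.finrank_le (LinearMap.range (Yᵀ).mulVecLin)
    rw [Module.finrank_fintype_fun_eq_card, Fintype.card_fin] at h1
    omega
  obtain ⟨v, hv⟩ := exists_linearIndependent_of_le_finrank hker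
  have hv' : LinearIndependent ℝ fun c => (v c : Fin n → ℝ) :=
    hv.map' (Submodule.subtype _) (Submodule.ker_subtype _)
  refine ⟨Matrix.of fun i c => (v c : Fin n → ℝ) i, ?_, ?_⟩
  · ext c j
    have : ∑ i, Y i j * (v c : Fin n → ℝ) i = 0 := congrFun (LinearMap.mem_ker.1 (v c).2) j
    simpa [Matrix.mul_apply, mul_comm] using this
  · rw [← injective_mulVec_iff_det_gram_ne_zero, Matrix.mulVec_injective_iff]
    exact hv'

/-- Near a solution of `Y Yᵀ ∈ B + span β` at which the pencil is injective, all column spaces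
carry a positive semidefinite element of `B + span β`. -/
theorem eventually_exists_posSemidef (hq : 0 < q)
    (hcard : Fintype.card (Sym2 (Fin q)) + k = Fintype.card (Sym2 (Fin n)))
    {β : Fin k → Sym2 (Fin n) → ℝ} {B : Sym2 (Fin n) → ℝ} {Y : Fin n → Fin q → ℝ}
    {t : Fin k → ℝ}
    (hY : Matrix.of Y * (Matrix.of Y)ᵀ = symMatrixOf B + ∑ i, t i • symMatrixOf (β i))
    (hinj : Function.Injective (symPencil β Y).mulVec) :
    ∀ᶠ Z : Fin n → Fin q → ℝ in 𝓝 Y, ∃ (A : Matrix (Fin q) (Fin q) ℝ) (t' : Fin k → ℝ),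
      (Matrix.of Z * A * (Matrix.of Z)ᵀ).PosSemidef ∧ Matrix.of Z * A * (Matrix.of Z)ᵀ ≠ 0 ∧
      Matrix.of Z * A * (Matrix.of Z)ᵀ = symMatrixOf B + ∑ i, t' i • symMatrixOf (β i) := by
  have hc : Fintype.card (Sym2 (Fin q) ⊕ Fin k) = Fintype.card (Sym2 (Fin n)) := by
    rw [Fintype.card_sum, Fintype.card_fin, hcard]
  let ε := Fintype.equivOfCardEq hc
  let M : (Fin n → Fin q → ℝ) → Matrix (Sym2 (Fin q) ⊕ Fin k) (Sym2 (Fin q) ⊕ Fin k) ℝ :=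
    fun Z => (symPencil β Z).submatrix ε id
  have hMmul : ∀ Z x, M Z *ᵥ x = (symPencil β Z *ᵥ x) ∘ ε := fun Z x => rfl
  have hMc : Continuous M := by
    refine continuous_matrix fun i j => ?_
    have h1 := (analyticOnNhd_symPencil (n := n) (q := q) (k := k) (ε i) j).continuousOn
    rw [continuousOn_univ] at h1
    exact h1.comp (f := fun Z : Fin n → Fin q → ℝ => (β, Z)) (by fun_prop)
  have hdet : (M Y).det ≠ 0 := by
    rw [← isUnit_iff_ne_zero, ← Matrix.isUnit_iff_isUnit_det, ← Matrix.mulVec_injective_iff_isUnit]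
    intro x y hxy
    apply hinj
    have : (symPencil β Y *ᵥ x) ∘ ε = (symPencil β Y *ᵥ y) ∘ ε := hxy
    exact ε.surjective.injective_comp_right this
  let x : (Fin n → Fin q → ℝ) → Sym2 (Fin q) ⊕ Fin k → ℝ := fun Z => (M Z)⁻¹ *ᵥ (B ∘ ε)
  have hxc : ContinuousAt x Y := by
    have h3 : ContinuousAt (fun Z => (M Z)⁻¹) Y := continuousAt_inv_of_det_ne_zero hMc hdet
    exact (continuous_id.matrix_mulVec continuous_const).continuousAt.comp h3
  have hsolve : ∀ Z, (M Z).det ≠ 0 → symPencil β Z *ᵥ x Z = B := by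
    intro Z hZ
    apply ε.surjective.injective_comp_right
    change M Z *ᵥ ((M Z)⁻¹ *ᵥ (B ∘ ε)) = B ∘ ε
    rw [Matrix.mulVec_mulVec, Matrix.mul_nonsing_inv _ (isUnit_iff_ne_zero.2 hZ),
      Matrix.one_mulVec]
  have hxY : x Y = Sum.elim (symVec 1) fun i => - t i := by
    apply hinj
    rw [hsolve Y hdet]
    apply symMatrixOf_injective
    rw [symMatrixOf_symPencil_mulVec]
    simp only [Sum.elim_inl, Sum.elim_inr]
    change _ = Matrix.of Y * symMatrixOf (symVec 1) * _ + _
    rw [symMatrixOf_symVec Matrix.transpose_one, Matrix.mul_one, hY]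
    simp
  have hone : ∀ i j : Fin q, x Y (Sum.inl s(i, j)) = (1 : Matrix (Fin q) (Fin q) ℝ) i j := by
    intro i j
    rw [hxY, Sum.elim_inl, symVec_mk Matrix.transpose_one]
  have hclose : ∀ᶠ Z in 𝓝 Y, ∀ i j : Fin q,
      |x Z (Sum.inl s(i, j)) - (1 : Matrix (Fin q) (Fin q) ℝ) i j| ≤ ((q : ℝ) + 1)⁻¹ := by
    refine eventually_all.2 fun i => eventually_all.2 fun j => ?_
    have h1 : ContinuousAt (fun Z => x Z (Sum.inl s(i, j))) Y :=
      continuousAt_pi.1 hxc _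
    have h2 := Metric.tendsto_nhds.1 h1 ((q : ℝ) + 1)⁻¹ (by positivity)
    filter_upwards [h2] with Z hZ
    rw [Real.dist_eq, hone] at hZ
    exact hZ.le
  filter_upwards [hclose, hMc.matrix_det.continuousAt.eventually_ne hdet] with Z hZ hZdet
  set A := symMatrixOf fun u => x Z (Sum.inl u) with hA
  have hApd : A.PosDef := posDef_of_close_to_one (symMatrixOf_isHermitian _) hZ
  have heq : Matrix.of Z * A * (Matrix.of Z)ᵀ =
      symMatrixOf B + ∑ i, (- x Z (Sum.inr i)) • symMatrixOf (β i) := by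
    have := symMatrixOf_symPencil_mulVec β Z (x Z)
    rw [hsolve Z hZdet] at this
    rw [this]
    simp [hA]
  refine ⟨A, fun i => - x Z (Sum.inr i),
    hApd.posSemidef.mul_mul_conjTranspose_same (Matrix.of Z), ?_, heq⟩
  intro h0
  have h1 := symMatrixOf_symPencil_mulVec β Z (Sum.elim (fun u => x Z (Sum.inl u)) 0)
  simp only [Sum.elim_inl, Sum.elim_inr, Pi.zero_apply, zero_smul, Finset.sum_const_zero,
    add_zero] at h1
  rw [← hA, h0] at h1
  have h2 : symPencil β Z *ᵥ (Sum.elim (fun u => x Z (Sum.inl u)) 0) = 0 :=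
    symMatrixOf_injective (h1.trans symMatrixOf_zero.symm)
  have h3 : M Z *ᵥ (Sum.elim (fun u => x Z (Sum.inl u)) 0) = 0 := by
    rw [hMmul, h2]; rfl
  have h4 := Matrix.eq_zero_of_mulVec_eq_zero hZdet h3
  have h5 : A = 0 := by
    ext i j
    exact congrFun h4 (Sum.inl s(i, j))
  have h6 := hApd.diag_pos (i := ⟨0, hq⟩)
  rw [h5] at h6
  simp at h6

/-- A nondegenerate low rank element of the linear system obstructs the existence of the MLE
for a set of data with nonempty interior. -/
theorem not_ae_mleExists (hn : e + q ≤ n) (hq : 0 < q)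
    (hcard : Fintype.card (Sym2 (Fin q)) + k = Fintype.card (Sym2 (Fin n)))
    {β : Fin k → Sym2 (Fin n) → ℝ} {B : Sym2 (Fin n) → ℝ} {Y : Fin n → Fin q → ℝ}
    {t : Fin k → ℝ}
    (hY : Matrix.of Y * (Matrix.of Y)ᵀ = symMatrixOf B + ∑ i, t i • symMatrixOf (β i))
    (hinj : Function.Injective (symPencil β Y).mulVec)
    {L : Submodule ℝ (Matrix (Fin n) (Fin n) ℝ)} (hB : symMatrixOf B ∈ L)
    (hβ : ∀ i, symMatrixOf (β i) ∈ L) :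
    ¬ ∀ᵐ X : Fin n → Fin e → ℝ,
      MLEExists (linearConcentrationModel L) (Matrix.of X * (Matrix.of X)ᵀ) := by
  obtain ⟨X₀, hX₀Y, hX₀⟩ := exists_orthogonal_columns (Matrix.of Y) hn
  have hPX₀ : rejectColumns (Matrix.of Y) X₀ = Matrix.of Y := by
    rw [rejectColumns, hX₀Y, Matrix.mul_zero, sub_zero]
  have hev : Tendsto (rejectColumns (Matrix.of Y)) (𝓝 X₀) (𝓝 (Matrix.of Y)) := by
    have := (continuousAt_rejectColumns (Matrix.of Y) hX₀).tendsto
    rwa [hPX₀] at this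
  have hgram : Continuous fun X : Matrix (Fin n) (Fin e) ℝ => (Xᵀ * X).det := by fun_prop
  have hmem : ∀ᶠ X : Matrix (Fin n) (Fin e) ℝ in 𝓝 X₀,
      ¬ MLEExists (linearConcentrationModel L) (X * Xᵀ) := by
    filter_upwards [hev.eventually (eventually_exists_posSemidef hq hcard hY hinj),
      hgram.continuousAt.eventually_ne hX₀] with X hX hXdet
    obtain ⟨A, t', hpsd, hne, heq⟩ := hX
    refine not_mleExists ?_ hpsd hne ?_
    · rw [heq]
      exact L.add_mem hB (L.sum_mem fun i _ => L.smul_mem _ (hβ i))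
    · have h1 := congrArg Matrix.transpose (transpose_mul_rejectColumns (Matrix.of Y) hXdet)
      rw [Matrix.transpose_mul, Matrix.transpose_transpose, Matrix.transpose_zero] at h1
      change _ * A * (rejectColumns (Matrix.of Y) X)ᵀ * X = 0
      rw [Matrix.mul_assoc, h1, Matrix.mul_zero]
  intro hae
  let x₀ : Fin n → Fin e → ℝ := X₀
  have hmem' : {X : Fin n → Fin e → ℝ |
      ¬ MLEExists (linearConcentrationModel L) (Matrix.of X * (Matrix.of X)ᵀ)} ∈ 𝓝 x₀ := hmem
  exact (Measure.measure_pos_of_mem_nhds volume hmem').ne' (ae_iff.1 hae)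

end Openness

section Main

variable {e q m : ℕ}

theorem linearIndependent_of_injective_symPencil {n k : ℕ} {β : Fin k → Sym2 (Fin n) → ℝ}
    {Y : Fin n → Fin q → ℝ} (h : Function.Injective (symPencil β Y).mulVec) :
    LinearIndependent ℝ β := by
  rw [Fintype.linearIndependent_iff]
  intro t ht i
  have h1 : symPencil β Y *ᵥ Sum.elim 0 t = symPencil β Y *ᵥ 0 := by
    apply symMatrixOf_injective
    rw [symMatrixOf_symPencil_mulVec, Matrix.mulVec_zero]
    simp only [Sum.elim_inl, Sum.elim_inr, ← symMatrixOf_smul, ← symMatrixOf_sum, ht]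
    change Matrix.of Y * symMatrixOf (0 : Sym2 (Fin q) → ℝ) * _ + _ = _
    simp
  exact congrFun (h h1) (Sum.inr i)

/-- Below the threshold, the MLE generically fails to exist with positive probability. -/
theorem ae_not_ae_mleExists {k : ℕ} (hq : 0 < q) (σ : Fin k ≃ {s // Touches e q s})
    (hm : k < m) :
    ∀ᵐ b : Fin m → Sym2 (Fin (e + q)) → ℝ, (∀ i, (symMatrixOf (b i)).PosDef) →
      ¬ ∀ᵐ X : Fin (e + q) → Fin e → ℝ,
        MLEExists (linearConcentrationModel
          (Submodule.span ℝ (Set.range fun i => symMatrixOf (b i))))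
          (Matrix.of X * (Matrix.of X)ᵀ) := by
  classical
  have hcard : Fintype.card (Sym2 (Fin q)) + k = Fintype.card (Sym2 (Fin (e + q))) := by
    rw [← card_touches e q, ← Fintype.card_congr σ, Fintype.card_fin, add_comm]
  have hinj := ae_injective_symPencil σ
  have hli : ∀ᵐ β : Fin k → Sym2 (Fin (e + q)) → ℝ, LinearIndependent ℝ β :=
    (Measure.ae_ae_of_ae_prod hinj).mono fun β hβ =>
      let ⟨_, hY⟩ := hβ.exists
      linearIndependent_of_injective_symPencil hY
  have hpair : ∀ᵐ p : (Fin k → Sym2 (Fin (e + q)) → ℝ) × (Sym2 (Fin (e + q)) → ℝ),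
      (symMatrixOf p.2).PosSemidef → ∃ (Y : Fin (e + q) → Fin q → ℝ) (t : Fin k → ℝ),
        Matrix.of Y * (Matrix.of Y)ᵀ = symMatrixOf p.2 + ∑ i, t i • symMatrixOf (p.1 i) ∧
          Function.Injective (symPencil p.1 Y).mulVec := by
    filter_upwards [Measure.quasiMeasurePreserving_fst.ae hli, ae_transversal (e + q) k,
      ae_notMem_multiplierMap_image hinj] with p hp htrans hmult hpsd
    obtain ⟨Y₁, hY₁⟩ := hmult.exists
    exact exists_injective_symPencil (exists_low_rank hp hcard.ge hpsd) htrans hY₁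
  let ρ : (Fin m → Sym2 (Fin (e + q)) → ℝ) →ₗ[ℝ]
      (Fin k → Sym2 (Fin (e + q)) → ℝ) × (Sym2 (Fin (e + q)) → ℝ) :=
    (LinearMap.funLeft ℝ _ (Fin.castLE hm.le)).prod (LinearMap.proj ⟨k, hm⟩)
  have hρ : Function.Surjective ρ := by
    rintro ⟨β, B⟩
    refine ⟨fun i => if h : (i : ℕ) < k then β ⟨i, h⟩ else B, Prod.ext ?_ ?_⟩
    · ext i s
      simp [ρ, LinearMap.funLeft_apply]
    · simp [ρ]
  filter_upwards [ae_comp_of_surjective (μ := volume) ρ hρ hpair] with b hb hpd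
  obtain ⟨Y, t, hY, hYinj⟩ := hb (hpd _).posSemidef
  exact not_ae_mleExists le_rfl hq hcard hY hYinj (Submodule.subset_span ⟨⟨k, hm⟩, rfl⟩)
    fun i => Submodule.subset_span ⟨Fin.castLE hm.le i, rfl⟩

/-- At the threshold, the MLE generically exists almost surely. -/
theorem ae_ae_mleExists (hm₁ : 1 ≤ m) (hm : ∃ σ : Fin m → Sym2 (Fin (e + q)),
      Function.Injective σ ∧ ∀ i, Touches e q (σ i)) :
    ∀ᵐ b : Fin m → Sym2 (Fin (e + q)) → ℝ, (∀ i, (symMatrixOf (b i)).PosDef) →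
      ∀ᵐ X : Fin (e + q) → Fin e → ℝ,
        MLEExists (linearConcentrationModel
          (Submodule.span ℝ (Set.range fun i => symMatrixOf (b i))))
          (Matrix.of X * (Matrix.of X)ᵀ) := by
  filter_upwards [ae_ae_mul_eq_zero hm] with b hb hpd
  filter_upwards [hb] with X hX
  refine mleExists_of_inf_ker (Submodule.subset_span ⟨⟨0, hm₁⟩, rfl⟩) (hpd ⟨0, hm₁⟩) ?_
  intro K hK hKX
  obtain ⟨t, rfl⟩ := (Submodule.mem_span_range_iff_exists_fun ℝ).1 hK
  simp [hX t hKX]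

end Main

theorem mlt_generic_linear_concentration (n m : ℕ) (hm₁ : 1 ≤ m) (hm : m ≤ n * (n + 1) / 2) :
    ∃ d : ℕ,
      IsLeast {e : ℕ | 0 < e ∧ (m : ℤ) ≤ (n : ℤ) * (e : ℤ) - (e : ℤ) * ((e : ℤ) - 1) / 2} d ∧
      ∀ᵐ b : Fin m → (Sym2 (Fin n) → ℝ) ∂volume,
        (∀ i, (symMatrixOf (b i)).PosDef) →
          IsMLThreshold
            (linearConcentrationModel
              (Submodule.span ℝ (Set.range fun i => symMatrixOf (b i)))) d := by
  classical
  have hn : 0 < n := by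
    rcases Nat.eq_zero_or_pos n with rfl | h
    · simp at hm; omega
    · exact h
  have key : ∀ e, e < n → (n : ℤ) * (e : ℤ) - (e : ℤ) * ((e : ℤ) - 1) / 2 < m →
      ∀ᵐ b : Fin m → (Sym2 (Fin n) → ℝ), (∀ i, (symMatrixOf (b i)).PosDef) →
        ¬ ∀ᵐ X : Fin n → Fin e → ℝ, MLEExists (linearConcentrationModel
          (Submodule.span ℝ (Set.range fun i => symMatrixOf (b i))))
          (Matrix.of X * (Matrix.of X)ᵀ) := by
    intro e hen hem
    obtain ⟨q, rfl⟩ := Nat.exists_eq_add_of_le hen.le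
    rw [← card_touches_eq, Nat.cast_lt] at hem
    exact ae_not_ae_mleExists (by omega) (Fintype.equivFin {s // Touches e q s}).symm hem
  let P : ℕ → Prop := fun e =>
    0 < e ∧ (m : ℤ) ≤ (n : ℤ) * (e : ℤ) - (e : ℤ) * ((e : ℤ) - 1) / 2
  have hPn : P n := by
    refine ⟨hn, ?_⟩
    have h1 : (Fintype.card {s // Touches n 0 s} : ℤ) = (n : ℤ) * n - (n : ℤ) * ((n : ℤ) - 1) / 2 :=
      card_touches_eq n 0
    rw [← h1]
    have h2 := card_touches n 0
    have h3 : Fintype.card (Sym2 (Fin 0)) = 0 := by simp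
    rw [h3, Sym2.card, Fintype.card_fin, Nat.choose_two_right, Nat.add_sub_cancel, mul_comm,
      Nat.add_zero] at h2
    rw [h2]
    exact_mod_cast hm
  have hP : ∃ e, P e := ⟨n, hPn⟩
  obtain ⟨hd0, hdm⟩ : P (Nat.find hP) := Nat.find_spec hP
  have hdn : Nat.find hP ≤ n := Nat.find_min' hP hPn
  refine ⟨Nat.find hP, ⟨⟨hd0, hdm⟩, fun e he => Nat.find_min' hP he⟩, ?_⟩
  have hup : ∀ᵐ b : Fin m → (Sym2 (Fin n) → ℝ), (∀ i, (symMatrixOf (b i)).PosDef) →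
      ∀ᵐ X : Fin n → Fin (Nat.find hP) → ℝ, MLEExists (linearConcentrationModel
        (Submodule.span ℝ (Set.range fun i => symMatrixOf (b i))))
        (Matrix.of X * (Matrix.of X)ᵀ) := by
    generalize Nat.find hP = d at hdm hdn
    obtain ⟨q, rfl⟩ := Nat.exists_eq_add_of_le hdn
    rw [← card_touches_eq, Nat.cast_le] at hdm
    refine ae_ae_mleExists hm₁ ?_
    obtain ⟨σ⟩ := Function.Embedding.nonempty_of_card_le
      (α := Fin m) (β := {s // Touches d q s}) (by simpa using hdm)
    exact ⟨fun i => (σ i).1, Subtype.val_injective.comp σ.injective, fun i => (σ i).2⟩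
  have hlow : ∀ᵐ b : Fin m → (Sym2 (Fin n) → ℝ), ∀ e ∈ Set.Ioo 0 (Nat.find hP),
      (∀ i, (symMatrixOf (b i)).PosDef) →
      ¬ ∀ᵐ X : Fin n → Fin e → ℝ, MLEExists (linearConcentrationModel
        (Submodule.span ℝ (Set.range fun i => symMatrixOf (b i))))
        (Matrix.of X * (Matrix.of X)ᵀ) := by
    rw [ae_all_iff]
    intro e
    by_cases he : e ∈ Set.Ioo 0 (Nat.find hP)
    · have hnot : ¬ P e := Nat.find_min hP he.2
      have hlt : e < n := he.2.trans_le hdn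
      have hem : (n : ℤ) * (e : ℤ) - (e : ℤ) * ((e : ℤ) - 1) / 2 < m := by
        by_contra! h
        exact hnot ⟨he.1, h⟩
      refine (key e hlt hem).mono fun b hb _ => hb
    · exact Filter.Eventually.of_forall fun b h => absurd h he
  filter_upwards [hup, hlow] with b hb hb' hpd
  refine ⟨⟨hd0, hb hpd⟩, ?_⟩
  rintro e ⟨he0, he⟩
  by_contra! hlt
  exact hb' e ⟨he0, hlt⟩ hpd he
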